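/- arXiv:2006.01909 — 2 statements merged into one kernel-verified Lean document; each statement's English description precedes it below -/
import Mathlib

section
/- Let n ≥ 3 and let Z be a valuation from polytopes in ℝⁿ containing the origin to ℝⁿ satisfying Z(φP) = φ^{-T}Z(P) for all φ ∈ SL(n,ℝ). Then Z is simple, i.e., Z(P) = 0 for every such polytope P with dim P ≤ n−1. -/
open scoped RealInnerProductSpace

noncomputable section

/-- Euclidean n-space. -/
abbrev E (n : ℕ) := EuclideanSpace ℝ (Fin n)

/-- A (convex) polytope: convex hull of a nonempty finite set. -/
def IsPolytope {n : ℕ} (P : Set (E n)) : Prop :=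
  ∃ S : Finset (E n), S.Nonempty ∧ P = convexHull ℝ (S : Set (E n))

/-- Support function. -/
def suppFn {n : ℕ} (P : Set (E n)) (u : E n) : ℝ :=
  sSup ((fun x => ⟪x, u⟫) '' P)

/-- The face of `P` in direction `u`. -/
def face {n : ℕ} (P : Set (E n)) (u : E n) : Set (E n) :=
  {x ∈ P | ⟪x, u⟫ = suppFn P u}

/-- Dimension of a set: rank of the direction of its affine span. -/
def polyDim {n : ℕ} (P : Set (E n)) : ℕ :=
  Module.finrank ℝ (affineSpan ℝ P).direction

/-- The set of outer unit facet normals of `P`. -/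
def normals {n : ℕ} (P : Set (E n)) : Set (E n) :=
  {u | ‖u‖ = 1 ∧ polyDim (face P u) = n - 1}

/-- `a_P(u)`: the (n-1)-dimensional Hausdorff measure of the facet `F(P,u)`. -/
def facetArea {n : ℕ} (P : Set (E n)) (u : E n) : ℝ :=
  (MeasureTheory.Measure.hausdorffMeasure ((n : ℝ) - 1) (face P u)).toReal

/-- `V(P,u)`: volume of the cone `conv{0, F(P,u)}`. -/
def coneVol {n : ℕ} (P : Set (E n)) (u : E n) : ℝ :=
  (MeasureTheory.volume (convexHull ℝ ({0} ∪ face P u))).toReal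

/-- Facet normals whose facet does not contain the origin in its affine hull. -/
def goodNormals {n : ℕ} (P : Set (E n)) : Set (E n) :=
  {u ∈ normals P | (0 : E n) ∉ affineSpan ℝ (face P u)}

/-- The facet vector `fv_ζ`. -/
def fv {n : ℕ} (ζ : ℝ → ℝ) (P : Set (E n)) : E n :=
  ∑ᶠ u ∈ goodNormals P, (ζ (coneVol P u) / suppFn P u) • u

/-- The linear action of a matrix on Euclidean space. -/
def act {n : ℕ} (M : Matrix (Fin n) (Fin n) ℝ) : E n →ₗ[ℝ] E n :=
  Matrix.toEuclideanLin M

/-- Inverse transpose of a matrix. -/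
def invT {n : ℕ} (M : Matrix (Fin n) (Fin n) ℝ) : Matrix (Fin n) (Fin n) ℝ :=
  (M⁻¹).transpose

/-- The `k`-dimensional standard simplex `T^k = conv{0, e₁, …, e_k}` in `ℝⁿ`. -/
def Tk (n k : ℕ) : Set (E n) :=
  convexHull ℝ ({0} ∪ (fun i : Fin n => EuclideanSpace.single i (1 : ℝ)) '' {i | (i : ℕ) < k})

/-!
A polytope `P` of smaller dimension lies in `uᗮ` for some `u ≠ 0`. The transvections
`x ↦ x + ⟪u, x⟫ w` with `w ⊥ u` fix `P` pointwise, so contravariance forces `Z P` to be a multiple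
of `u`. Two orthogonal choices of `u` give `Z P = 0`, which settles the polytopes of dimension at
most `n - 2`. If `P` is a simplex in `uᗮ` with one vertex at the origin, then exchanging two of its
other vertices (possible as `n ≥ 3`) and reflecting in `uᗮ` is a map in `SL(n)` that preserves `P`
and negates `u`, so `Z P = 0` again.

By the valuation property, it remains to cut `P` by hyperplanes through the origin, finitely many
times, into such simplices and pieces of smaller dimension. By Carathéodory, the simplices whose
vertices are the origin and vertices of `P` cover `P`. The hyperplanes through the origin that
contain a facet of such a simplex or the points where the facets opposite to the origin of two of
them cross cut `P` into pieces, each the intersection of a cone with a single simplex. Finally,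
cutting a simplex by a hyperplane through the origin gives pieces that can be subdivided into
simplices of the same kind, by splitting the edges that cross the hyperplane one at a time.
-/

section KerCrossing

variable {𝕜 V : Type*} [Field 𝕜] [AddCommGroup V] [Module 𝕜 V]

/-- The point of the line through `p` and `q` on the kernel of the linear form `h`, with the junk
value `0` when `h p = h q`. -/
def kerCrossing (h : Module.Dual 𝕜 V) (p q : V) : V :=
  (h p - h q)⁻¹ • (h p • q - h q • p)

lemma map_kerCrossing (h : Module.Dual 𝕜 V) (p q : V) : h (kerCrossing h p q) = 0 := by
  simp [kerCrossing, mul_comm]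

lemma kerCrossing_neg_swap (h : Module.Dual 𝕜 V) (p q : V) :
    kerCrossing (-h) q p = kerCrossing h p q := by
  simp only [kerCrossing, LinearMap.neg_apply]
  congr 1
  · ring
  · module

variable [LinearOrder 𝕜] [IsStrictOrderedRing 𝕜]

lemma kerCrossing_mem_segment {h : Module.Dual 𝕜 V} {p q : V} (hp : 0 ≤ h p) (hq : h q < 0) :
    kerCrossing h p q ∈ segment 𝕜 p q := by
  have hpq : 0 < h p - h q := by linarith
  refine ⟨-h q / (h p - h q), h p / (h p - h q), div_nonneg (by linarith) hpq.le,
    div_nonneg hp hpq.le, ?_, ?_⟩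
  · field_simp; ring
  · rw [kerCrossing]; module

lemma mem_segment_kerCrossing {h : Module.Dual 𝕜 V} {p q x : V} (hp : 0 ≤ h p) (hq : h q < 0)
    (hx : x ∈ segment 𝕜 p q) (hhx : 0 ≤ h x) : x ∈ segment 𝕜 p (kerCrossing h p q) := by
  obtain ⟨a, b, ha, hb, hab, rfl⟩ := hx
  simp only [map_add, map_smul, smul_eq_mul] at hhx
  rcases hp.eq_or_lt' with hp0 | hp
  · obtain rfl : b = 0 := by nlinarith
    obtain rfl : a = 1 := by linarith
    simpa using left_mem_segment 𝕜 p _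
  · have hpq : h p - h q ≠ 0 := by linarith
    refine ⟨(a * h p + b * h q) / h p, b * (h p - h q) / h p, by positivity,
      div_nonneg (mul_nonneg hb (by linarith)) hp.le, ?_, ?_⟩
    · field_simp
      linear_combination h p * hab
    · rw [kerCrossing]
      match_scalars <;> field_simp
      ring

lemma convex_setOf_kerCrossing_mem {K : Set V} (hK : Convex 𝕜 K) (h : Module.Dual 𝕜 V) (q : V) :
    Convex 𝕜 {p | h q < h p ∧ kerCrossing h p q ∈ K} := by
  rintro p ⟨hp, hpK⟩ p' ⟨hp', hpK'⟩ a b ha hb hab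
  have hsum : h (a • p + b • p') - h q = a * (h p - h q) + b * (h p' - h q) := by
    simp only [map_add, map_smul, smul_eq_mul]
    linear_combination h q * hab
  have hpos : 0 < a * (h p - h q) + b * (h p' - h q) :=
    convex_Ioi (𝕜 := 𝕜) 0 (sub_pos.2 hp) (sub_pos.2 hp') ha hb hab
  refine ⟨by linarith, ?_⟩
  convert convex_iff_div.1 hK hpK hpK' (mul_nonneg ha (sub_pos.2 hp).le)
    (mul_nonneg hb (sub_pos.2 hp').le) hpos using 1
  have hp₀ : h p - h q ≠ 0 := by linarith
  have hp₀' : h p' - h q ≠ 0 := by linarith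
  have hpos₀ := hpos.ne'
  obtain rfl : b = 1 - a := by linarith
  simp only [kerCrossing]
  rw [hsum]
  simp only [map_add, map_smul, smul_eq_mul]
  match_scalars <;> field_simp

end KerCrossing

section HalfSpace

variable {𝕜 V : Type*} [Field 𝕜] [LinearOrder 𝕜] [AddCommGroup V] [Module 𝕜 V]

/-- Generators of `convexHull 𝕜 S ∩ {x | 0 ≤ h x}`: the points of `S` on the nonnegative side of
`h`, and the points where the segments joining the two sides meet the kernel of `h`. -/
def halfSpaceGenerators (h : Module.Dual 𝕜 V) (S : Set V) : Set V :=
  {p ∈ S | 0 ≤ h p} ∪ Set.image2 (kerCrossing h) {p ∈ S | 0 ≤ h p} {q ∈ S | h q < 0}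

lemma finite_halfSpaceGenerators (h : Module.Dual 𝕜 V) {S : Set V} (hS : S.Finite) :
    (halfSpaceGenerators h S).Finite :=
  (hS.sep _).union ((hS.sep _).image2 _ (hS.sep _))

variable [IsStrictOrderedRing 𝕜]

lemma convex_setOf_nonneg (h : Module.Dual 𝕜 V) : Convex 𝕜 {x | 0 ≤ h x} :=
  convex_halfSpace_ge h.isLinear 0

lemma convexHull_halfSpaceGenerators_subset (h : Module.Dual 𝕜 V) (S : Set V) :
    convexHull 𝕜 (halfSpaceGenerators h S) ⊆ convexHull 𝕜 S ∩ {x | 0 ≤ h x} := by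
  refine convexHull_min ?_ ((convex_convexHull 𝕜 _).inter (convex_setOf_nonneg h))
  rintro x (⟨hxS, hx⟩ | ⟨p, ⟨hpS, hp⟩, q, ⟨hqS, hq⟩, rfl⟩)
  · exact ⟨subset_convexHull 𝕜 _ hxS, hx⟩
  · exact ⟨(convex_convexHull 𝕜 _).segment_subset (subset_convexHull 𝕜 _ hpS)
      (subset_convexHull 𝕜 _ hqS) (kerCrossing_mem_segment hp hq), (map_kerCrossing h p q).ge⟩

lemma kerCrossing_mem_of_mem_convexHull {h : Module.Dual 𝕜 V} {K A B : Set V} (hK : Convex 𝕜 K)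
    (hA : ∀ p ∈ A, 0 ≤ h p) (hB : ∀ q ∈ B, h q < 0)
    (hAB : ∀ p ∈ A, ∀ q ∈ B, kerCrossing h p q ∈ K)
    {p q : V} (hp : p ∈ convexHull 𝕜 A) (hq : q ∈ convexHull 𝕜 B) : kerCrossing h p q ∈ K := by
  have hpB : ∀ q ∈ B, kerCrossing h p q ∈ K := by
    intro q hq
    have hAK : A ⊆ {p | h q < h p ∧ kerCrossing h p q ∈ K} := fun p hp ↦
      ⟨(hB q hq).trans_le (hA p hp), hAB p hp q hq⟩
    exact (convexHull_min hAK (convex_setOf_kerCrossing_mem hK h q) hp).2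
  have hp₀ : 0 ≤ h p := convexHull_min hA (convex_setOf_nonneg h) hp
  have hBK : B ⊆ {q | (-h) p < (-h) q ∧ kerCrossing (-h) q p ∈ K} := fun q hq ↦
    ⟨neg_lt_neg ((hB q hq).trans_le hp₀), by rw [kerCrossing_neg_swap]; exact hpB q hq⟩
  rw [← kerCrossing_neg_swap]
  exact (convexHull_min hBK (convex_setOf_kerCrossing_mem hK (-h) p) hq).2

theorem convexHull_inter_setOf_nonneg (h : Module.Dual 𝕜 V) (S : Set V) :
    convexHull 𝕜 S ∩ {x | 0 ≤ h x} = convexHull 𝕜 (halfSpaceGenerators h S) := by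
  refine subset_antisymm ?_ (convexHull_halfSpaceGenerators_subset h S)
  rintro x ⟨hxS, hx⟩
  set A : Set V := {p ∈ S | 0 ≤ h p}
  set B : Set V := {q ∈ S | h q < 0}
  have hS : S = A ∪ B := by
    ext p
    simpa [A, B, ← and_or_left] using fun _ ↦ le_or_gt 0 (h p)
  have hA : convexHull 𝕜 A ⊆ convexHull 𝕜 (halfSpaceGenerators h S) :=
    convexHull_mono Set.subset_union_left
  have hA₀ : convexHull 𝕜 A ⊆ {x | 0 ≤ h x} :=
    convexHull_min (fun p hp ↦ hp.2) (convex_setOf_nonneg h)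
  have hB₀ : convexHull 𝕜 B ⊆ {x | h x < 0} :=
    convexHull_min (fun q hq ↦ hq.2) (convex_halfSpace_lt h.isLinear 0)
  rw [hS] at hxS
  rcases B.eq_empty_or_nonempty with hBe | hBne
  · exact hA (by simpa [hBe] using hxS)
  rcases A.eq_empty_or_nonempty with hAe | hAne
  · exact absurd (hB₀ (by simpa [hAe] using hxS)) (not_lt.2 hx)
  obtain ⟨p, hp, q, hq, hxpq⟩ := mem_convexJoin.1 ((convexHull_union hAne hBne).subset hxS)
  refine (convex_convexHull 𝕜 _).segment_subset (hA hp) ?_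
    (mem_segment_kerCrossing (hA₀ hp) (hB₀ hq) hxpq hx)
  exact kerCrossing_mem_of_mem_convexHull (convex_convexHull 𝕜 _) (fun p hp ↦ hp.2)
    (fun q hq ↦ hq.2) (fun p hp q hq ↦ subset_convexHull 𝕜 _ (.inr ⟨p, hp, q, hq, rfl⟩)) hp hq

end HalfSpace

section Caratheodory

variable {ι 𝕜 V : Type*} [Field 𝕜] [LinearOrder 𝕜] [IsStrictOrderedRing 𝕜]
  [AddCommGroup V] [Module 𝕜 V] {v : ι → V} {s : Finset ι} {c : ι → 𝕜}

lemma exists_sum_smul_eq_zero_of_not_linearIndepOn (hs : ¬ LinearIndepOn 𝕜 v (s : Set ι)) :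
    ∃ g : ι → 𝕜, ∑ i ∈ s, g i • v i = 0 ∧ 0 ≤ ∑ i ∈ s, g i ∧ ∃ i ∈ s, 0 < g i := by
  rw [linearIndepOn_finset_iff] at hs
  push Not at hs
  obtain ⟨g, hg, i, hi, hgi⟩ := hs
  wlog hsum : 0 ≤ ∑ i ∈ s, g i generalizing g
  · exact this (-g) (by simpa using hg) (by simpa using hgi)
      (by simpa using (not_le.1 hsum).le)
  refine ⟨g, hg, hsum, ?_⟩
  by_contra! hneg
  have := (Finset.sum_eq_zero_iff_of_nonpos hneg).1 (hsum.antisymm' (Finset.sum_nonpos hneg))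
  exact hgi (this i hi)

lemma exists_sum_erase_smul_eq [DecidableEq ι] (hs : ¬ LinearIndepOn 𝕜 v (s : Set ι))
    (hc : ∀ i ∈ s, 0 ≤ c i) :
    ∃ i₀ ∈ s, ∃ c' : ι → 𝕜, (∀ i ∈ s, 0 ≤ c' i) ∧
      ∑ i ∈ s.erase i₀, c' i ≤ ∑ i ∈ s, c i ∧
      ∑ i ∈ s.erase i₀, c' i • v i = ∑ i ∈ s, c i • v i := by
  obtain ⟨g, hg, hsum, hpos⟩ := exists_sum_smul_eq_zero_of_not_linearIndepOn hs
  obtain ⟨i₀, hi₀, hmin⟩ := Finset.exists_min_image {i ∈ s | 0 < g i} (fun i ↦ c i / g i)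
    (by simpa [Finset.filter_nonempty_iff] using hpos)
  simp only [Finset.mem_filter, and_imp] at hi₀ hmin
  obtain ⟨hi₀, hgi₀⟩ := hi₀
  set r := c i₀ / g i₀
  have hr : 0 ≤ r := div_nonneg (hc i₀ hi₀) hgi₀.le
  have hr₀ : c i₀ - r * g i₀ = 0 := by simp [r, hgi₀.ne']
  refine ⟨i₀, hi₀, fun i ↦ c i - r * g i, fun i hi ↦ ?_, ?_, ?_⟩
  · rcases le_or_gt (g i) 0 with hgi | hgi
    · linarith [hc i hi, mul_nonpos_of_nonneg_of_nonpos hr hgi]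
    · linarith [(le_div_iff₀ hgi).1 (hmin i hi hgi)]
  · rw [Finset.sum_erase s hr₀, Finset.sum_sub_distrib, ← Finset.mul_sum]
    linarith [mul_nonneg hr hsum]
  · rw [Finset.sum_erase s (by simp only [hr₀, zero_smul])]
    simp [sub_smul, mul_smul, ← Finset.smul_sum, hg]

theorem exists_linearIndepOn_sum_smul_eq (hc : ∀ i ∈ s, 0 ≤ c i) :
    ∃ t ⊆ s, LinearIndepOn 𝕜 v (t : Set ι) ∧ ∃ c' : ι → 𝕜, (∀ i ∈ t, 0 ≤ c' i) ∧
      ∑ i ∈ t, c' i ≤ ∑ i ∈ s, c i ∧ ∑ i ∈ t, c' i • v i = ∑ i ∈ s, c i • v i := by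
  classical
  induction s using Finset.strongInduction generalizing c with
  | H s ih =>
    by_cases hs : LinearIndepOn 𝕜 v (s : Set ι)
    · exact ⟨s, subset_rfl, hs, c, hc, le_rfl, rfl⟩
    obtain ⟨i₀, hi₀, c₁, hc₁, hle₁, heq₁⟩ := exists_sum_erase_smul_eq hs hc
    obtain ⟨t, hts, ht, c₂, hc₂, hle₂, heq₂⟩ := ih _ (Finset.erase_ssubset hi₀)
      fun i hi ↦ hc₁ i (Finset.mem_of_mem_erase hi)
    exact ⟨t, hts.trans (Finset.erase_subset _ _), ht, c₂, hc₂, hle₂.trans hle₁, heq₂.trans heq₁⟩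

end Caratheodory

section CornerSimplex

variable {ι ι' 𝕜 V : Type*} [Field 𝕜] [LinearOrder 𝕜] [AddCommGroup V] [Module 𝕜 V]

/-- The simplex with one vertex at the origin and the others at the vectors of the basis `b`. -/
def cornerSimplex (b : Module.Basis ι 𝕜 V) : Set V :=
  {x | (∀ i, 0 ≤ b.coord i x) ∧ b.sumCoords x ≤ 1}

variable (b : Module.Basis ι 𝕜 V)

lemma cornerSimplex_reindex (e : ι ≃ ι') : cornerSimplex (b.reindex e) = cornerSimplex b := by
  ext x
  simp [cornerSimplex, e.symm.forall_congr_left, Module.Basis.sumCoords_reindex]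

lemma image_cornerSimplex {V' : Type*} [AddCommGroup V'] [Module 𝕜 V'] (e : V ≃ₗ[𝕜] V') :
    e '' cornerSimplex b = cornerSimplex (b.map e) := by
  rw [LinearEquiv.image_eq_preimage_symm]
  ext x
  simp [cornerSimplex, Module.Basis.sumCoords]

lemma image_transvection_cornerSimplex {i j : ι} (hij : i ≠ j) :
    LinearMap.transvection (b.coord i - b.coord j) (b j - b i) '' cornerSimplex b
      = cornerSimplex b := by
  classical
  let e := b.equiv b (Equiv.swap i j)
  have he : LinearMap.transvection (b.coord i - b.coord j) (b j - b i) = e := by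
    refine b.ext fun k ↦ ?_
    rw [LinearMap.transvection.apply]
    rcases eq_or_ne k i with rfl | hki
    · simp [e, hij]
    rcases eq_or_ne k j with rfl | hkj
    · simp [e, hij]
    · simp [e, hki, hkj, Equiv.swap_apply_of_ne_of_ne]
  have hmap : b.map e = b.reindex (Equiv.swap i j) := by
    ext k
    simp [e]
  rw [he, LinearEquiv.coe_coe, image_cornerSimplex, hmap, cornerSimplex_reindex]

variable [IsStrictOrderedRing 𝕜]

lemma zero_mem_cornerSimplex : 0 ∈ cornerSimplex b := by
  simp [cornerSimplex]

lemma basis_mem_cornerSimplex (i : ι) : b i ∈ cornerSimplex b := by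
  classical
  refine ⟨fun j ↦ ?_, (b.sumCoords_self_apply i).le⟩
  rw [b.coord_apply, b.repr_self, Finsupp.single_apply]
  split_ifs <;> simp

lemma convex_cornerSimplex : Convex 𝕜 (cornerSimplex b) := by
  simpa only [cornerSimplex, Set.ofPred_and, Set.ofPred_forall] using
    (convex_iInter fun i ↦ convex_setOf_nonneg (b.coord i)).inter
      (convex_halfSpace_le b.sumCoords.isLinear 1)

lemma sum_smul_mem_of_sum_le_one {κ : Type*} {K : Set V} (hK : Convex 𝕜 K) (h0 : 0 ∈ K)
    {t : Finset κ} {c : κ → 𝕜} {z : κ → V} (hc : ∀ i ∈ t, 0 ≤ c i) (hsum : ∑ i ∈ t, c i ≤ 1)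
    (hz : ∀ i ∈ t, z i ∈ K) : ∑ i ∈ t, c i • z i ∈ K := by
  rcases (Finset.sum_nonneg hc).eq_or_lt' with h | h
  · rwa [Finset.sum_eq_zero fun i hi ↦ by rw [(Finset.sum_eq_zero_iff_of_nonneg hc).1 h i hi,
      zero_smul]]
  · have := hK.smul_mem_of_zero_mem h0 (hK.centerMass_mem hc h hz) ⟨h.le, hsum⟩
    rwa [Finset.centerMass, smul_inv_smul₀ h.ne'] at this

lemma cornerSimplex_subset [Finite ι] {K : Set V} (hK : Convex 𝕜 K) (h0 : 0 ∈ K)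
    (hb : ∀ i, b i ∈ K) : cornerSimplex b ⊆ K := by
  have := Fintype.ofFinite ι
  rintro x ⟨hx, hsum⟩
  rw [← b.sum_repr x]
  exact sum_smul_mem_of_sum_le_one hK h0 (fun i _ ↦ hx i)
    (by simpa [b.coe_sumCoords_of_fintype] using hsum) (fun i _ ↦ hb i)

theorem exists_mem_cornerSimplex [FiniteDimensional 𝕜 V] {S : Set V} (hS : S.Finite)
    (hspan : Submodule.span 𝕜 S = ⊤) {x : V} (hx : x ∈ convexHull 𝕜 S) :
    ∃ b : Module.Basis (Fin (Module.finrank 𝕜 V)) 𝕜 V, (∀ i, b i ∈ S) ∧ x ∈ cornerSimplex b := by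
  lift S to Finset V using hS
  obtain ⟨w, hw, hw₁, rfl⟩ := Finset.mem_convexHull'.1 hx
  obtain ⟨t, htS, ht, c, hc, hc₁, hcx⟩ := exists_linearIndepOn_sum_smul_eq (v := id) hw
  let b₀ := Module.Basis.extendLe ht (Finset.coe_subset.2 htS) hspan.ge
  have := FiniteDimensional.fintypeBasisIndex b₀
  let b := b₀.reindex (Fintype.equivFinOfCardEq (Module.finrank_eq_card_basis b₀).symm)
  refine ⟨b, fun i ↦ ?_, ?_⟩
  · rw [Module.Basis.reindex_apply]
    exact Module.Basis.extendLe_subset ht (Finset.coe_subset.2 htS) hspan.ge ⟨_, rfl⟩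
  · rw [cornerSimplex_reindex]
    simp only [id] at hcx
    rw [← hcx]
    refine sum_smul_mem_of_sum_le_one (convex_cornerSimplex b₀) (zero_mem_cornerSimplex b₀) hc
      (hc₁.trans hw₁.le) fun s hs ↦ ?_
    obtain ⟨i, hi⟩ := Module.Basis.subset_extendLe ht (Finset.coe_subset.2 htS) hspan.ge hs
    rw [← hi]
    exact basis_mem_cornerSimplex b₀ i

end CornerSimplex

section SplitBasis

variable {ι 𝕜 V : Type*} [DecidableEq ι] [Field 𝕜] [AddCommGroup V] [Module 𝕜 V]
  {b b' : Module.Basis ι 𝕜 V} {i j : ι} {p q : 𝕜}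

lemma exists_basis_eq_update [Finite ι] (b : Module.Basis ι 𝕜 V) (hij : i ≠ j) (hq : q ≠ 0) :
    ∃ b' : Module.Basis ι 𝕜 V, ⇑b' = Function.update b j (p • b i + q • b j) := by
  have := Fintype.ofFinite ι
  have : Nonempty ι := ⟨i⟩
  have hli : LinearIndependent 𝕜 (Function.update b j (p • b i + q • b j)) :=
    b.linearIndependent.update j _ ⟨1, one_mem _, Finsupp.single i p + Finsupp.single j q,
      by simpa [hij] using hq, by simp⟩
  exact ⟨basisOfLinearIndependentOfCardEqFinrank hli (Module.finrank_eq_card_basis b).symm,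
    coe_basisOfLinearIndependentOfCardEqFinrank _ _⟩

lemma sumCoords_eq_of_eq_update (hb' : ⇑b' = Function.update b j (p • b i + q • b j))
    (hpq : p + q = 1) : b'.sumCoords = b.sumCoords := by
  refine b'.ext fun l ↦ ?_
  rw [b'.sumCoords_self_apply, hb']
  rcases eq_or_ne l j with rfl | hl
  · simp only [Function.update_self, map_add, map_smul, b.sumCoords_self_apply, smul_eq_mul,
      mul_one, hpq]
  · rw [Function.update_of_ne hl, b.sumCoords_self_apply]

lemma coord_self_of_eq_update (hb' : ⇑b' = Function.update b j (p • b i + q • b j)) (hij : i ≠ j) :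
    b.coord j = q • b'.coord j := by
  refine b'.ext fun m ↦ ?_
  rw [LinearMap.smul_apply, b'.coord_apply, b'.repr_self, hb']
  rcases eq_or_ne m j with rfl | hm <;> simp [*]

lemma coord_of_eq_update_of_ne (hb' : ⇑b' = Function.update b j (p • b i + q • b j)) {l : ι}
    (hl : l ≠ j) : b.coord l = b'.coord l + (if l = i then p else 0) • b'.coord j := by
  refine b'.ext fun m ↦ ?_
  rw [LinearMap.add_apply, LinearMap.smul_apply, b'.coord_apply, b'.coord_apply, b'.repr_self, hb']
  rcases eq_or_ne m j with rfl | hm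
  · simp [hl, Finsupp.single_apply, eq_comm]
  · simp [hm]

variable [LinearOrder 𝕜] [IsStrictOrderedRing 𝕜]

lemma cornerSimplex_eq_of_eq_update (hb' : ⇑b' = Function.update b j (p • b i + q • b j))
    (hij : i ≠ j) (hp : 0 < p) (hq : 0 < q) (hpq : p + q = 1) :
    cornerSimplex b' = cornerSimplex b ∩ {x | 0 ≤ (q • b.coord i - p • b.coord j) x} := by
  have hcut : q • b.coord i - p • b.coord j = q • b'.coord i := by
    rw [coord_of_eq_update_of_ne hb' hij, coord_self_of_eq_update hb' hij, if_pos rfl]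
    module
  ext x
  have hj : b.coord j x = q * b'.coord j x := by rw [coord_self_of_eq_update hb' hij]; rfl
  have hl {l : ι} (hl : l ≠ j) :
      b.coord l x = b'.coord l x + (if l = i then p else 0) * b'.coord j x := by
    rw [coord_of_eq_update_of_ne hb' hl]; rfl
  rw [hcut]
  constructor
  · rintro ⟨hx, hsum⟩
    refine ⟨⟨fun l ↦ ?_, by rwa [← sumCoords_eq_of_eq_update hb' hpq]⟩, mul_nonneg hq.le (hx i)⟩
    by_cases hlj : l = j
    · exact hlj ▸ hj ▸ mul_nonneg hq.le (hx j)
    · exact hl hlj ▸ add_nonneg (hx l) (mul_nonneg (by split_ifs <;> order) (hx j))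
  · rintro ⟨⟨hx, hsum⟩, hi⟩
    refine ⟨fun l ↦ ?_, by rwa [sumCoords_eq_of_eq_update hb' hpq]⟩
    by_cases hlj : l = j
    · exact hlj ▸ nonneg_of_mul_nonneg_right (hj ▸ hx j) hq
    by_cases hli : l = i
    · exact hli ▸ nonneg_of_mul_nonneg_right hi hq
    · simpa [hl hlj, hli] using hx l

end SplitBasis

section Dissectible

open Module (Basis Dual finrank)

variable {𝕜 V : Type*} [Field 𝕜] [AddCommGroup V] [Module 𝕜 V]

lemma span_ne_top_of_forall_eq_zero {h : Dual 𝕜 V} (hh : h ≠ 0) {P : Set V}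
    (hP : ∀ x ∈ P, h x = 0) : Submodule.span 𝕜 P ≠ ⊤ := fun htop ↦
  hh (LinearMap.ker_eq_top.1 (top_le_iff.1 (htop ▸ Submodule.span_le.2 hP)))

lemma span_ne_top_of_subset {P Q : Set V} (hPQ : P ⊆ Q) (hQ : Submodule.span 𝕜 Q ≠ ⊤) :
    Submodule.span 𝕜 P ≠ ⊤ :=
  ne_top_of_le_ne_top hQ (Submodule.span_mono hPQ)

lemma card_filter_update_lt {ι : Type*} [Fintype ι] [DecidableEq ι] [DecidableEq 𝕜]
    (h : Dual 𝕜 V) {v : ι → V} {j : ι} {z : V} (hj : h (v j) ≠ 0) (hz : h z = 0) :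
    Finset.card {l | h (Function.update v j z l) ≠ 0} < Finset.card {l | h (v l) ≠ 0} := by
  refine Finset.card_lt_card (Finset.ssubset_iff_of_subset ?_ |>.2 ⟨j, by simpa using hj, ?_⟩)
  · intro l
    rcases eq_or_ne l j with rfl | hl <;> simp [*]
  · simpa using hz

variable [LinearOrder 𝕜]

variable (𝕜) in
/-- The sets obtained from degenerate sets and corner simplices by gluing two pieces along a
hyperplane through the origin, finitely many times. -/
inductive IsDissectible : Set V → Prop
  | flat {P : Set V} (hP : Submodule.span 𝕜 P ≠ ⊤) : IsDissectible P
  | simplex (b : Basis (Fin (finrank 𝕜 V)) 𝕜 V) : IsDissectible (cornerSimplex b)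
  | glue {P : Set V} (h : Dual 𝕜 V) (hpos : IsDissectible (P ∩ {x | 0 ≤ h x}))
      (hneg : IsDissectible (P ∩ {x | 0 ≤ (-h) x})) : IsDissectible P

/-- The polyhedral cone on which all the linear forms in `F` are nonnegative. -/
def nonnegCone (F : Finset (Dual 𝕜 V)) : Set V :=
  {x | ∀ f ∈ F, 0 ≤ f x}

lemma inter_nonnegCone_insert [DecidableEq (Dual 𝕜 V)] (P : Set V) (f : Dual 𝕜 V)
    (F : Finset (Dual 𝕜 V)) : P ∩ nonnegCone (insert f F) = P ∩ {x | 0 ≤ f x} ∩ nonnegCone F := by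
  ext x
  simp [nonnegCone, and_assoc]

theorem IsDissectible.of_forall_nonnegCone {P : Set V} (A : Finset (Dual 𝕜 V))
    (hP : ∀ F : Finset (Dual 𝕜 V), (∀ h ∈ A, h ∈ F ∨ -h ∈ F) → IsDissectible 𝕜 (P ∩ nonnegCone F)) :
    IsDissectible 𝕜 P := by
  classical
  induction A using Finset.induction_on generalizing P with
  | empty => simpa [nonnegCone] using hP ∅ (by simp)
  | insert a A _ ih =>
    have key (a' : Dual 𝕜 V) (ha' : a' = a ∨ a' = -a) : IsDissectible 𝕜 (P ∩ {x | 0 ≤ a' x}) := by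
      refine ih fun F hF ↦ ?_
      rw [← inter_nonnegCone_insert]
      refine hP _ (Finset.forall_mem_insert _ _ _ |>.2 ⟨?_, fun h hh ↦ ?_⟩)
      · rcases ha' with rfl | rfl <;> simp
      · exact (hF h hh).imp (Finset.mem_insert_of_mem ·) (Finset.mem_insert_of_mem ·)
    exact glue a (key a (.inl rfl)) (key (-a) (.inr rfl))

variable [IsStrictOrderedRing 𝕜]

lemma exists_convex_combination_eq_zero {x y : 𝕜} (hx : 0 < x) (hy : y < 0) :
    ∃ p q : 𝕜, 0 < p ∧ 0 < q ∧ p + q = 1 ∧ p * x + q * y = 0 := by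
  have hxy : 0 < x - y := by linarith
  exact ⟨-y / (x - y), x / (x - y), div_pos (by linarith) hxy, div_pos hx hxy,
    by field_simp; ring, by field_simp; ring⟩

lemma IsDissectible.cornerSimplex_inter (h : Dual 𝕜 V) (b : Basis (Fin (finrank 𝕜 V)) 𝕜 V) :
    IsDissectible 𝕜 (cornerSimplex b ∩ {x | 0 ≤ h x}) := by
  induction hN : Finset.card {l | h (b l) ≠ 0} using Nat.strong_induction_on generalizing b with
  | h N ih =>
  by_cases hneg : ∀ i, 0 ≤ h (b i)
  · rw [Set.inter_eq_left.2 (cornerSimplex_subset b (convex_setOf_nonneg h) (by simp) hneg)]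
    exact simplex b
  by_cases hpos : ∀ i, h (b i) ≤ 0
  · have hsub : cornerSimplex b ⊆ {x | 0 ≤ (-h) x} :=
      cornerSimplex_subset b (convex_setOf_nonneg (-h)) (by simp) (by simpa using hpos)
    have hh : h ≠ 0 := by rintro rfl; simp at hneg
    exact flat (span_ne_top_of_forall_eq_zero hh fun x hx ↦
      le_antisymm (neg_nonneg.1 (hsub hx.1)) hx.2)
  push Not at hneg hpos
  obtain ⟨i, hi⟩ := hpos
  obtain ⟨j, hj⟩ := hneg
  have hij : i ≠ j := by rintro rfl; order
  obtain ⟨p, q, hp, hq, hpq, hz⟩ := exists_convex_combination_eq_zero hi hj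
  obtain ⟨b₁, hb₁⟩ := exists_basis_eq_update b hij hq.ne' (p := p)
  obtain ⟨b₂, hb₂⟩ := exists_basis_eq_update b hij.symm hp.ne' (p := q)
  refine glue (q • b.coord i - p • b.coord j) ?_ ?_
  · rw [Set.inter_right_comm, ← cornerSimplex_eq_of_eq_update hb₁ hij hp hq hpq]
    refine ih _ ?_ b₁ rfl
    rw [← hN, hb₁]
    exact card_filter_update_lt h hj.ne (by simpa using hz)
  · rw [neg_sub, Set.inter_right_comm,
      ← cornerSimplex_eq_of_eq_update hb₂ hij.symm hq hp (by linarith)]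
    refine ih _ ?_ b₂ rfl
    rw [← hN, hb₂]
    exact card_filter_update_lt h hi.ne' (by simpa [add_comm] using hz)

theorem IsDissectible.inter_setOf_nonneg {P : Set V} (hP : IsDissectible 𝕜 P) (h : Dual 𝕜 V) :
    IsDissectible 𝕜 (P ∩ {x | 0 ≤ h x}) := by
  induction hP with
  | flat hP => exact flat (span_ne_top_of_subset Set.inter_subset_left hP)
  | simplex b => exact cornerSimplex_inter h b
  | glue k _ _ ihpos ihneg =>
    rw [Set.inter_right_comm] at ihpos ihneg
    exact glue k ihpos ihneg

lemma convex_nonnegCone (F : Finset (Dual 𝕜 V)) : Convex 𝕜 (nonnegCone F) := by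
  simp only [nonnegCone, Set.ofPred_forall]
  exact convex_iInter₂ fun f _ ↦ convex_setOf_nonneg f

theorem IsDissectible.inter_nonnegCone {P : Set V} (hP : IsDissectible 𝕜 P)
    (F : Finset (Dual 𝕜 V)) : IsDissectible 𝕜 (P ∩ nonnegCone F) := by
  classical
  induction F using Finset.induction_on generalizing P with
  | empty => simpa [nonnegCone] using hP
  | insert f F _ ih =>
    rw [inter_nonnegCone_insert]
    exact ih (hP.inter_setOf_nonneg f)

end Dissectible

section Arrangement

open Module (Basis Dual finrank)

variable {V : Type*} [NormedAddCommGroup V] [NormedSpace ℝ V]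

lemma dense_setOf_ne_zero {h : Dual ℝ V} (hh : h ≠ 0) : Dense {x | h x ≠ 0} := by
  refine interior_eq_empty_iff_dense_compl.1 (Set.not_nonempty_iff_eq_empty.1 fun hne ↦ hh ?_)
  exact LinearMap.ker_eq_top.1 (Submodule.eq_top_of_nonempty_interior' _ hne)

variable [FiniteDimensional ℝ V]

lemma isClosed_cornerSimplex {ι : Type*} (b : Basis ι ℝ V) : IsClosed (cornerSimplex b) := by
  have hcont (h : Dual ℝ V) : Continuous h := h.continuous_of_finiteDimensional
  simp only [cornerSimplex, Set.ofPred_and, Set.ofPred_forall]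
  exact (isClosed_iInter fun i ↦ isClosed_le continuous_const (hcont _)).inter
    (isClosed_le (hcont _) continuous_const)

lemma isOpen_setOf_ne_zero (h : Dual ℝ V) : IsOpen {x | h x ≠ 0} :=
  isOpen_ne_fun h.continuous_of_finiteDimensional continuous_const

lemma dense_setOf_forall_ne_zero {A : Set (Dual ℝ V)} (hA : A.Finite) :
    Dense {x | ∀ h ∈ A, h ≠ 0 → h x ≠ 0} := by
  have : {x | ∀ h ∈ A, h ≠ 0 → h x ≠ 0} = ⋂ h ∈ A \ {0}, {x | h x ≠ 0} := by
    ext x; simp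
  rw [this]
  exact dense_biInter_of_isOpen (fun h _ ↦ isOpen_setOf_ne_zero h) hA.sdiff.countable
    fun h hh ↦ dense_setOf_ne_zero hh.2

lemma subset_closure_inter_of_dense {Q U : Set V} (hQ : Convex ℝ Q) (h0 : 0 ∈ Q)
    (hspan : Submodule.span ℝ Q = ⊤) (hU : Dense U) : Q ⊆ closure (Q ∩ U) := by
  have hint : (interior Q).Nonempty := by
    rw [hQ.interior_nonempty_iff_affineSpan_eq_top, ← Set.insert_eq_of_mem h0,
      ← AffineSubspace.coe_eq_univ_iff, affineSpan_insert_zero, hspan, Submodule.top_coe]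
  calc Q ⊆ closure Q := subset_closure
    _ = closure (interior Q) := (hQ.closure_interior_eq_closure_of_nonempty_interior hint).symm
    _ ⊆ closure (interior Q ∩ U) := closure_minimal (hU.open_subset_closure_inter isOpen_interior)
      isClosed_closure
    _ ⊆ closure (Q ∩ U) := by gcongr; exact interior_subset

end Arrangement

section Walls

open Module (Basis Dual finrank)

variable (𝕜 : Type*) {V : Type*} [Field 𝕜] [AddCommGroup V] [Module 𝕜 V]

/-- The bases of `V` with all vectors in `S`. Their index type is fixed, so that they form a
type. -/
def basesIn (S : Set V) : Set (Basis (Fin (finrank 𝕜 V)) 𝕜 V) :=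
  {b | ∀ i, b i ∈ S}

lemma finite_basesIn {S : Set V} (hS : S.Finite) : (basesIn 𝕜 S).Finite :=
  (Set.Finite.pi' fun _ ↦ hS).preimage DFunLike.coe_injective.injOn

/-- The linear forms whose signs at `x` decide which of the corner simplices with vertices in `S`
contain `x`, as soon as one of them does: the coordinates tell the cones over the simplices that
contain `x`, the differences order these cones by the height of `x` in the simplex. -/
def walls (S : Set V) : Set (Dual 𝕜 V) :=
  (⋃ i, (fun b : Basis _ 𝕜 V ↦ b.coord i) '' basesIn 𝕜 S) ∪
    Set.image2 (fun b b' : Basis _ 𝕜 V ↦ b'.sumCoords - b.sumCoords) (basesIn 𝕜 S) (basesIn 𝕜 S)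

lemma finite_walls {S : Set V} (hS : S.Finite) : (walls 𝕜 S).Finite :=
  (Set.finite_iUnion fun _ ↦ (finite_basesIn 𝕜 hS).image _).union
    ((finite_basesIn 𝕜 hS).image2 _ (finite_basesIn 𝕜 hS))

variable {𝕜}

lemma coord_mem_walls {S : Set V} {b : Basis (Fin (finrank 𝕜 V)) 𝕜 V} (hb : b ∈ basesIn 𝕜 S)
    (i : Fin (finrank 𝕜 V)) : b.coord i ∈ walls 𝕜 S :=
  .inl (Set.mem_iUnion.2 ⟨i, b, hb, rfl⟩)

lemma sumCoords_sub_mem_walls {S : Set V} {b b' : Basis (Fin (finrank 𝕜 V)) 𝕜 V}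
    (hb : b ∈ basesIn 𝕜 S) (hb' : b' ∈ basesIn 𝕜 S) : b'.sumCoords - b.sumCoords ∈ walls 𝕜 S :=
  .inr ⟨b, hb, b', hb', rfl⟩

variable [LinearOrder 𝕜] [IsStrictOrderedRing 𝕜]

lemma exists_sumCoords_minimum {S : Set V} (hS : S.Finite) {F : Finset (Dual 𝕜 V)}
    (hF : ∀ h ∈ walls 𝕜 S, h ∈ F ∨ -h ∈ F) {T : Set (Basis (Fin (finrank 𝕜 V)) 𝕜 V)}
    (hTS : T ⊆ basesIn 𝕜 S) (hT : T.Nonempty) :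
    ∃ b₀ ∈ T, ∀ b ∈ T, ∀ x ∈ nonnegCone F, b₀.sumCoords x ≤ b.sumCoords x := by
  obtain ⟨b₀, hb₀, hmin⟩ := ((finite_basesIn 𝕜 hS).subset hTS).exists_minimalFor
    (fun b (x : nonnegCone F) ↦ b.sumCoords x) T hT
  refine ⟨b₀, hb₀, fun b hb x hx ↦ ?_⟩
  rcases hF _ (sumCoords_sub_mem_walls (hTS hb₀) (hTS hb)) with h | h
  · simpa using hx _ h
  · exact hmin hb (fun y ↦ by simpa using y.2 _ h) ⟨x, hx⟩

lemma coord_mem_of_pos {S : Set V} {F : Finset (Dual 𝕜 V)}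
    (hF : ∀ h ∈ walls 𝕜 S, h ∈ F ∨ -h ∈ F) {b : Basis (Fin (finrank 𝕜 V)) 𝕜 V}
    (hb : b ∈ basesIn 𝕜 S) {x : V} (hxF : x ∈ nonnegCone F) {i : Fin (finrank 𝕜 V)}
    (hx : 0 < b.coord i x) : b.coord i ∈ F := by
  refine (hF _ (coord_mem_walls hb i)).resolve_right fun h ↦ hx.not_ge ?_
  simpa using hxF _ h

end Walls

section Dissection

open Module (Basis Dual finrank)

variable {V : Type*} [NormedAddCommGroup V] [NormedSpace ℝ V] [FiniteDimensional ℝ V]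

lemma exists_convexHull_inter_nonnegCone_subset {S : Set V} (hS : S.Finite)
    (h0 : 0 ∈ convexHull ℝ S) {F : Finset (Dual ℝ V)} (hF : ∀ h ∈ walls ℝ S, h ∈ F ∨ -h ∈ F)
    (hspan : Submodule.span ℝ (convexHull ℝ S ∩ nonnegCone F) = ⊤) :
    ∃ b ∈ basesIn ℝ S, convexHull ℝ S ∩ nonnegCone F ⊆ cornerSimplex b := by
  set Q := convexHull ℝ S ∩ nonnegCone F
  set U : Set V := {x | ∀ h ∈ walls ℝ S, h ≠ 0 → h x ≠ 0}
  have hQ0 : 0 ∈ Q := ⟨h0, fun f _ ↦ (map_zero f).ge⟩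
  have hQU : Q ⊆ closure (Q ∩ U) :=
    subset_closure_inter_of_dense ((convex_convexHull ℝ S).inter (convex_nonnegCone F)) hQ0 hspan
      (dense_setOf_forall_ne_zero (finite_walls ℝ hS))
  have hSspan : Submodule.span ℝ S = ⊤ := top_le_iff.1 <| hspan.ge.trans <| Submodule.span_le.2 <|
    Set.inter_subset_left.trans (convexHull_min Submodule.subset_span (Submodule.convex _))
  have hcover : ∀ x ∈ Q ∩ U, ∃ b ∈ {b ∈ basesIn ℝ S | ∀ i, b.coord i ∈ F}, x ∈ cornerSimplex b := by
    rintro x ⟨⟨hxS, hxF⟩, hxU⟩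
    obtain ⟨b, hb, hx⟩ := exists_mem_cornerSimplex hS hSspan hxS
    refine ⟨b, ⟨hb, fun i ↦ coord_mem_of_pos hF hb hxF ((hx.1 i).lt_of_ne' ?_)⟩, hx⟩
    exact hxU _ (coord_mem_walls hb i) fun h ↦ by simpa using DFunLike.congr_fun h (b i)
  obtain ⟨y, hy⟩ := closure_nonempty_iff.1 ⟨0, hQU hQ0⟩
  obtain ⟨b₀, ⟨hb₀S, hb₀F⟩, hmin⟩ := exists_sumCoords_minimum hS hF (Set.sep_subset _ _)
    ((hcover y hy).imp fun b hb ↦ hb.1)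
  refine ⟨b₀, hb₀S, hQU.trans (closure_minimal (fun x hx ↦ ?_) (isClosed_cornerSimplex b₀))⟩
  obtain ⟨b, hb, -, hxb⟩ := hcover x hx
  exact ⟨fun i ↦ hx.1.2 _ (hb₀F i), (hmin b hb x hx.1.2).trans hxb⟩

theorem isDissectible_convexHull {S : Set V} (hS : S.Finite) (h0 : 0 ∈ convexHull ℝ S) :
    IsDissectible ℝ (convexHull ℝ S) := by
  refine .of_forall_nonnegCone (finite_walls ℝ hS).toFinset fun F hF ↦ ?_
  simp only [Set.Finite.mem_toFinset] at hF
  by_cases hspan : Submodule.span ℝ (convexHull ℝ S ∩ nonnegCone F) = ⊤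
  · obtain ⟨b, hb, hsub⟩ := exists_convexHull_inter_nonnegCone_subset hS h0 hF hspan
    have hbS : cornerSimplex b ⊆ convexHull ℝ S := cornerSimplex_subset b (convex_convexHull ℝ S)
      h0 fun i ↦ subset_convexHull ℝ S (hb i)
    have heq : convexHull ℝ S ∩ nonnegCone F = cornerSimplex b ∩ nonnegCone F :=
      subset_antisymm (Set.subset_inter hsub Set.inter_subset_right)
        (Set.inter_subset_inter_left _ hbS)
    rw [heq]
    exact (IsDissectible.simplex b).inter_nonnegCone F
  · exact .flat hspan

end Dissection

section Contravariant

variable {n : ℕ} {Z : Set (E n) → E n} {P : Set (E n)} {u : E n}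

/-- Contravariance under `SL(n)` of a vector-valued map on the polytopes containing the origin. -/
def IsSLContravariant (Z : Set (E n) → E n) : Prop :=
  ∀ (φ : Matrix.SpecialLinearGroup (Fin n) ℝ) (P : Set (E n)), IsPolytope P → (0 : E n) ∈ P →
    Z (act (φ : Matrix (Fin n) (Fin n) ℝ) '' P) = act (invT (φ : Matrix (Fin n) (Fin n) ℝ)) (Z P)

lemma inner_act_invT {M : Matrix (Fin n) (Fin n) ℝ} (hM : IsUnit M.det) (z x : E n) :
    ⟪act (invT M) z, act M x⟫ = ⟪z, x⟫ := by
  have hadj : act (invT M) = LinearMap.adjoint (act M⁻¹) := by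
    rw [act, act, invT, ← Matrix.toEuclideanLin_conjTranspose_eq_adjoint,
      Matrix.conjTranspose_eq_transpose_of_trivial]
  have hinv : act M⁻¹ (act M x) = x := by
    simp [act, Matrix.toLpLin_apply, Matrix.mulVec_mulVec, Matrix.nonsing_inv_mul M hM]
  rw [hadj, LinearMap.adjoint_inner_left, hinv]

lemma IsSLContravariant.inner_map_eq (hZ : IsSLContravariant Z) (hP : IsPolytope P) (h0 : 0 ∈ P)
    {g : E n →ₗ[ℝ] E n} (hg : LinearMap.det g = 1) (hgP : g '' P = P) (x : E n) :
    ⟪Z P, g x⟫ = ⟪Z P, x⟫ := by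
  obtain ⟨M, rfl⟩ : ∃ M, act M = g := Matrix.toEuclideanLin.surjective g
  have hdet : M.det = 1 := by
    rw [← hg]
    exact (LinearMap.det_toLin (PiLp.basisFun 2 ℝ (Fin n)) M).symm
  have hZP : Z P = act (invT M) (Z P) := by
    conv_lhs => rw [← hgP]
    exact hZ ⟨M, hdet⟩ P hP h0
  rw [← inner_act_invT (hdet ▸ isUnit_one) (Z P) x, ← hZP]

lemma IsSLContravariant.inner_eq_zero (hZ : IsSLContravariant Z) (hP : IsPolytope P) (h0 : 0 ∈ P)
    (hu : u ≠ 0) (hPu : ∀ x ∈ P, ⟪u, x⟫ = 0) {w : E n} (hw : ⟪u, w⟫ = 0) : ⟪w, Z P⟫ = 0 := by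
  let g := LinearMap.transvection (innerₗ (E n) u) w
  have hg : LinearMap.det g = 1 := by
    rw [LinearMap.transvection.det, innerₗ_apply_apply, hw, add_zero]
  have hgP : g '' P = P := by
    have : Set.EqOn g id P := fun x hx ↦ by simp [g, LinearMap.transvection.apply, hPu x hx]
    rw [this.image_eq, Set.image_id]
  have key := hZ.inner_map_eq hP h0 hg hgP u
  rw [LinearMap.transvection.apply, inner_add_right, inner_smul_right, innerₗ_apply_apply,
    add_eq_left] at key
  rw [real_inner_comm]
  exact (mul_eq_zero.1 key).resolve_left (inner_self_ne_zero.2 hu)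

lemma IsSLContravariant.eq_zero_of_inner (hZ : IsSLContravariant Z) (hP : IsPolytope P)
    (h0 : 0 ∈ P) (hu : u ≠ 0) (hPu : ∀ x ∈ P, ⟪u, x⟫ = 0) (h : ⟪u, Z P⟫ = 0) : Z P = 0 :=
  inner_self_eq_zero.1 (hZ.inner_eq_zero hP h0 hu hPu h)

lemma IsSLContravariant.eq_zero_of_orthogonal_pair (hZ : IsSLContravariant Z) (hP : IsPolytope P)
    (h0 : 0 ∈ P) (hu : u ≠ 0) (hPu : ∀ x ∈ P, ⟪u, x⟫ = 0) {v : E n} (hv : v ≠ 0)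
    (hPv : ∀ x ∈ P, ⟪v, x⟫ = 0) (huv : ⟪v, u⟫ = 0) : Z P = 0 :=
  hZ.eq_zero_of_inner hP h0 hu hPu (hZ.inner_eq_zero hP h0 hv hPv huv)

lemma IsSLContravariant.eq_zero_of_det_eq_neg_one (hZ : IsSLContravariant Z) (hP : IsPolytope P)
    (h0 : 0 ∈ P) (hu : u ≠ 0) (hPu : ∀ x ∈ P, ⟪u, x⟫ = 0) {s : E n →ₗ[ℝ] E n}
    (hs : LinearMap.det s = -1) (hsu : s u = u) (hsP : s '' P = P) : Z P = 0 := by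
  set K := (ℝ ∙ u)ᗮ
  let r : E n →ₗ[ℝ] E n := K.reflection.toLinearMap
  have hru : r u = -u := Submodule.reflection_orthogonalComplement_singleton_eq_neg u
  have hrP : r '' P = P := by
    have : Set.EqOn r id P := fun x hx ↦ Submodule.reflection_mem_subspace_eq_self
      (Submodule.mem_orthogonal_singleton_iff_inner_right.2 (hPu x hx))
    rw [this.image_eq, Set.image_id]
  have hdet : LinearMap.det (r ∘ₗ s) = 1 := by
    have hr : LinearMap.det r = -1 := by
      rw [Submodule.det_reflection, Submodule.orthogonal_orthogonal, finrank_span_singleton hu,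
        pow_one]
    rw [LinearMap.det_comp, hr, hs, neg_one_mul, neg_neg]
  have key := hZ.inner_map_eq hP h0 hdet
    (by rw [LinearMap.coe_comp, Set.image_comp, hsP, hrP]) u
  rw [LinearMap.comp_apply, hsu, hru, inner_neg_right, real_inner_comm] at key
  exact hZ.eq_zero_of_inner hP h0 hu hPu (by linarith)

end Contravariant

section Simplex

open Module (Basis Dual finrank)

variable {n : ℕ} {Z : Set (E n) → E n} {u : E n}

lemma IsSLContravariant.cornerSimplex_eq_zero (hZ : IsSLContravariant Z) (hu : u ≠ 0)
    {ι : Type*} [Nontrivial ι] (b : Basis ι ℝ (ℝ ∙ u)ᗮ)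
    (hP : IsPolytope (Subtype.val '' cornerSimplex b)) :
    Z (Subtype.val '' cornerSimplex b) = 0 := by
  classical
  obtain ⟨i, j, hij⟩ := exists_pair_ne ι
  let f : Dual ℝ (E n) := (b.coord i - b.coord j) ∘ₗ (ℝ ∙ u)ᗮ.orthogonalProjectionOnto.toLinearMap
  let s := LinearMap.transvection f (b j - b i : (ℝ ∙ u)ᗮ).1
  have hf (x : (ℝ ∙ u)ᗮ) : f x = (b.coord i - b.coord j) x := by simp [f]
  have hfu : f u = 0 := by
    simp [f, Submodule.orthogonalProjectionOnto_orthogonalComplement_singleton_eq_zero]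
  have hs (x : (ℝ ∙ u)ᗮ) :
      s x = LinearMap.transvection (b.coord i - b.coord j) (b j - b i) x := by
    simp [s, LinearMap.transvection.apply, hf]
  refine hZ.eq_zero_of_det_eq_neg_one hP ⟨0, zero_mem_cornerSimplex b, rfl⟩ hu ?_ (s := s) ?_ ?_ ?_
  · rintro _ ⟨x, -, rfl⟩
    exact Submodule.mem_orthogonal_singleton_iff_inner_right.1 x.2
  · rw [LinearMap.transvection.det, hf]
    simp [hij]
  · simp [s, LinearMap.transvection.apply, hfu]
  · rw [Set.image_image]
    simp only [hs]
    rw [← Set.image_image Subtype.val, image_transvection_cornerSimplex b hij]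

end Simplex

section Polytope

open Module (Dual finrank)

variable {n : ℕ} {P : Set (E n)}

lemma IsPolytope.inter_setOf_nonneg (hP : IsPolytope P) (h0 : 0 ∈ P) (h : Dual ℝ (E n)) :
    IsPolytope (P ∩ {x | 0 ≤ h x}) := by
  obtain ⟨S, -, rfl⟩ := hP
  have hfin := finite_halfSpaceGenerators h S.finite_toSet
  have hne : (halfSpaceGenerators h (S : Set (E n))).Nonempty := by
    rw [← convexHull_nonempty_iff (𝕜 := ℝ), ← convexHull_inter_setOf_nonneg]
    exact ⟨0, h0, (map_zero h).ge⟩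
  exact ⟨hfin.toFinset, hfin.toFinset_nonempty.2 hne, by
    rw [hfin.coe_toFinset, convexHull_inter_setOf_nonneg]⟩

lemma IsPolytope.inter_setOf_eq_zero (hP : IsPolytope P) (h0 : 0 ∈ P) (h : Dual ℝ (E n)) :
    IsPolytope (P ∩ {x | h x = 0}) := by
  have hset : P ∩ {x | h x = 0} = P ∩ {x | 0 ≤ h x} ∩ {x | 0 ≤ (-h) x} := by
    ext x
    simp [and_assoc, le_antisymm_iff, and_comm]
  rw [hset]
  exact (hP.inter_setOf_nonneg h0 h).inter_setOf_nonneg ⟨h0, (map_zero h).ge⟩ (-h)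

lemma IsPolytope.image_inter_setOf_nonneg {W : Submodule ℝ (E n)} {Q : Set W}
    (hQ : IsPolytope (Subtype.val '' Q)) (h0 : 0 ∈ Q) (h : Dual ℝ W) :
    IsPolytope (Subtype.val '' (Q ∩ {x | 0 ≤ h x})) := by
  obtain ⟨g, rfl⟩ := h.exists_extend
  have hcut := Set.image_inter_preimage Subtype.val Q {x | 0 ≤ g x}
  exact hcut ▸ hQ.inter_setOf_nonneg ⟨0, h0, rfl⟩ g

lemma IsPolytope.image_inter_setOf_eq_zero {W : Submodule ℝ (E n)} {Q : Set W}
    (hQ : IsPolytope (Subtype.val '' Q)) (h0 : 0 ∈ Q) (h : Dual ℝ W) :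
    IsPolytope (Subtype.val '' (Q ∩ {x | h x = 0})) := by
  obtain ⟨g, rfl⟩ := h.exists_extend
  have hcut := Set.image_inter_preimage Subtype.val Q {x | g x = 0}
  exact hcut ▸ hQ.inter_setOf_eq_zero ⟨0, h0, rfl⟩ g

lemma IsPolytope.exists_image_convexHull_eq (hP : IsPolytope P) {W : Submodule ℝ (E n)}
    (hW : P ⊆ W) : ∃ S : Set W, S.Finite ∧ Subtype.val '' convexHull ℝ S = P := by
  obtain ⟨S, -, rfl⟩ := hP
  have himage : Subtype.val '' (Subtype.val ⁻¹' (S : Set (E n)) : Set W) = S :=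
    Set.image_preimage_eq_of_subset (by simpa using (subset_convexHull ℝ _).trans hW)
  refine ⟨Subtype.val ⁻¹' S, S.finite_toSet.preimage Subtype.val_injective.injOn, ?_⟩
  rw [← Submodule.coe_subtype, LinearMap.image_convexHull, Submodule.coe_subtype, himage]

lemma span_ne_top_of_polyDim (hn : n ≠ 0) (h0 : 0 ∈ P) (hdim : polyDim P ≤ n - 1) :
    Submodule.span ℝ P ≠ ⊤ := by
  intro htop
  have hdir : (affineSpan ℝ P).direction = ⊤ := by
    rw [direction_affineSpan, vectorSpan_eq_span_vsub_set_right ℝ h0]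
    simpa using htop
  rw [polyDim, hdir, finrank_top, finrank_euclideanSpace_fin] at hdim
  omega

lemma exists_orthogonal_of_span_ne_top {F : Type*} [NormedAddCommGroup F] [InnerProductSpace ℝ F]
    [FiniteDimensional ℝ F] {Q : Set F} (hQ : Submodule.span ℝ Q ≠ ⊤) :
    ∃ v ≠ 0, ∀ x ∈ Q, ⟪v, x⟫ = 0 := by
  obtain ⟨v, hv, hv0⟩ := (Submodule.ne_bot_iff _).1
    (mt (Submodule.orthogonal_eq_bot_iff (K := Submodule.span ℝ Q)).1 hQ)
  exact ⟨v, hv0, fun x hx ↦ (Submodule.mem_orthogonal' _ _).1 hv x (Submodule.subset_span hx)⟩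

end Polytope

section Valuation

open Module (Dual finrank)

variable {n : ℕ} {Z : Set (E n) → E n} {u : E n}

/-- Valuations on the polytopes containing the origin. -/
def IsPolytopeValuation (Z : Set (E n) → E n) : Prop :=
  ∀ P Q : Set (E n), IsPolytope P → IsPolytope Q → IsPolytope (P ∪ Q) → IsPolytope (P ∩ Q) →
    (0 : E n) ∈ P → (0 : E n) ∈ Q → Z P + Z Q = Z (P ∪ Q) + Z (P ∩ Q)

lemma IsPolytopeValuation.add_inter_setOf_nonneg (hZ : IsPolytopeValuation Z) {P : Set (E n)}
    (hP : IsPolytope P) (h0 : 0 ∈ P) (h : Dual ℝ (E n)) :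
    Z (P ∩ {x | 0 ≤ h x}) + Z (P ∩ {x | 0 ≤ (-h) x}) = Z P + Z (P ∩ {x | h x = 0}) := by
  have hunion : P ∩ {x | 0 ≤ h x} ∪ P ∩ {x | 0 ≤ (-h) x} = P := by
    ext x
    simpa [← and_or_left] using fun _ ↦ le_total 0 (h x)
  have hinter : (P ∩ {x | 0 ≤ h x}) ∩ (P ∩ {x | 0 ≤ (-h) x}) = P ∩ {x | h x = 0} := by
    ext x
    simp only [Set.mem_inter_iff, Set.mem_ofPred_eq, LinearMap.neg_apply]
    grind
  have key := hZ _ _ (hP.inter_setOf_nonneg h0 h) (hP.inter_setOf_nonneg h0 (-h))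
    (by rwa [hunion]) (by rw [hinter]; exact hP.inter_setOf_eq_zero h0 h)
    ⟨h0, (map_zero h).ge⟩ ⟨h0, (map_zero (-h)).ge⟩
  rwa [hunion, hinter] at key

lemma IsPolytopeValuation.add_image_inter_setOf_nonneg (hZ : IsPolytopeValuation Z)
    {W : Submodule ℝ (E n)} {Q : Set W} (hQ : IsPolytope (Subtype.val '' Q)) (h0 : 0 ∈ Q)
    (h : Dual ℝ W) :
    Z (Subtype.val '' (Q ∩ {x | 0 ≤ h x})) + Z (Subtype.val '' (Q ∩ {x | 0 ≤ (-h) x}))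
      = Z (Subtype.val '' Q) + Z (Subtype.val '' (Q ∩ {x | h x = 0})) := by
  obtain ⟨g, rfl⟩ := h.exists_extend
  have hcut (s : Set (E n)) := Set.image_inter_preimage Subtype.val Q s
  have key := hZ.add_inter_setOf_nonneg hQ ⟨0, h0, rfl⟩ g
  simp only [← hcut] at key
  exact key

lemma IsSLContravariant.image_eq_zero_of_span_ne_top (hZ : IsSLContravariant Z) (hu : u ≠ 0)
    {Q : Set (ℝ ∙ u)ᗮ} (hQ : Submodule.span ℝ Q ≠ ⊤) (hP : IsPolytope (Subtype.val '' Q))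
    (h0 : 0 ∈ Q) : Z (Subtype.val '' Q) = 0 := by
  obtain ⟨v, hv, hvQ⟩ := exists_orthogonal_of_span_ne_top hQ
  have hW (x : (ℝ ∙ u)ᗮ) : ⟪u, (x : E n)⟫ = 0 :=
    Submodule.mem_orthogonal_singleton_iff_inner_right.1 x.2
  refine hZ.eq_zero_of_orthogonal_pair hP ⟨0, h0, rfl⟩ hu (v := v) ?_ (by simpa using hv) ?_ ?_
  · rintro _ ⟨x, -, rfl⟩
    exact hW x
  · rintro _ ⟨x, hx, rfl⟩
    exact hvQ x hx
  · rw [real_inner_comm, hW]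

theorem IsDissectible.image_eq_zero (hval : IsPolytopeValuation Z) (hcontra : IsSLContravariant Z)
    (hn : 3 ≤ n) (hu : u ≠ 0) {Q : Set (ℝ ∙ u)ᗮ} (hQ : IsDissectible ℝ Q)
    (hP : IsPolytope (Subtype.val '' Q)) (h0 : 0 ∈ Q) : Z (Subtype.val '' Q) = 0 := by
  induction hQ with
  | flat hQ => exact hcontra.image_eq_zero_of_span_ne_top hu hQ hP h0
  | simplex b =>
    have hrank := (ℝ ∙ u).finrank_add_finrank_orthogonal
    rw [finrank_span_singleton hu, finrank_euclideanSpace_fin] at hrank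
    have : Nontrivial (Fin (finrank ℝ (ℝ ∙ u)ᗮ)) := Fin.nontrivial_iff_two_le.2 (by omega)
    exact hcontra.cornerSimplex_eq_zero hu b hP
  | @glue Q h _ _ ihpos ihneg =>
    have hpos := ihpos (hP.image_inter_setOf_nonneg h0 h) ⟨h0, (map_zero h).ge⟩
    have hneg := ihneg (hP.image_inter_setOf_nonneg h0 (-h)) ⟨h0, (map_zero (-h)).ge⟩
    rcases eq_or_ne h 0 with rfl | hh
    · simpa only [LinearMap.zero_apply, le_refl, Set.ofPred_true, Set.inter_univ] using hpos
    have hzero : Z (Subtype.val '' (Q ∩ {x | h x = 0})) = 0 :=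
      hcontra.image_eq_zero_of_span_ne_top hu
        (span_ne_top_of_forall_eq_zero hh fun _ hx ↦ hx.2)
        (hP.image_inter_setOf_eq_zero h0 h) ⟨h0, map_zero h⟩
    have key := hval.add_image_inter_setOf_nonneg hP h0 h
    rw [hpos, hneg, hzero, add_zero, add_zero] at key
    exact key.symm

end Valuation

/-- for `n ≥ 3`, every SL(n) contravariant valuation on polytopes
containing the origin is simple. -/
theorem contravariant_valuation_simple {n : ℕ} (hn : 3 ≤ n) (Z : Set (E n) → E n)
    (hval : ∀ P Q : Set (E n), IsPolytope P → IsPolytope Q →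
      IsPolytope (P ∪ Q) → IsPolytope (P ∩ Q) → (0 : E n) ∈ P → (0 : E n) ∈ Q →
      Z P + Z Q = Z (P ∪ Q) + Z (P ∩ Q))
    (hcontra : ∀ (φ : Matrix.SpecialLinearGroup (Fin n) ℝ) (P : Set (E n)),
      IsPolytope P → (0 : E n) ∈ P →
      Z (act (φ : Matrix (Fin n) (Fin n) ℝ) '' P)
        = act (invT (φ : Matrix (Fin n) (Fin n) ℝ)) (Z P)) :
    ∀ P : Set (E n), IsPolytope P → (0 : E n) ∈ P → polyDim P ≤ n - 1 → Z P = 0 := by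
  intro P hP h0 hdim
  obtain ⟨u, hu, huP⟩ := exists_orthogonal_of_span_ne_top
    (span_ne_top_of_polyDim (by omega) h0 hdim)
  have hPW : P ⊆ (ℝ ∙ u)ᗮ := fun x hx ↦
    Submodule.mem_orthogonal_singleton_iff_inner_right.2 (huP x hx)
  obtain ⟨S, hS, rfl⟩ := hP.exists_image_convexHull_eq hPW
  have hS0 : 0 ∈ convexHull ℝ S := by simpa using h0
  exact (isDissectible_convexHull hS hS0).image_eq_zero hval hcontra hn hu hP hS0
end
end

section
/- Let ζ : [0,∞) → ℝ be a solution of Cauchy's functional equation and let P = conv{0, v₁, …, v_r} be a two-dimensional polytope in ℝ² with the origin on its boundary and vertices 0, v₁, …, v_r labeled counter-clockwise. Define V°_ζ(P) = Σ_{i=2}^{r} [ζ(det(v_{i−1}, v_i))/det(v_{i−1}, v_i)]·(v_{i−1} − v_i). Then fv_ζ(P) = (1/2) ρ V°_ζ(P), where ρ is the counter-clockwise rotation by π/2 and fv_ζ is the facet vector. -/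
open scoped RealInnerProductSpace

noncomputable section

/-- The 2×2 determinant of the matrix with columns `v, w`. -/
def det2 (v w : E 2) : ℝ := v 0 * w 1 - v 1 * w 0

/-! The identity `det(b,c) a + det(c,a) b + det(a,b) c = 0` drives the proof. Since `0` is extreme,
it forces `det(vᵢ,vⱼ) > 0` for all `i < j`, and since `vⱼ` is extreme, it forces
`det(vᵢ,vₖ) < det(vᵢ,vⱼ) + det(vⱼ,vₖ)` for all `i < j < k`. The latter says that the functional
`⟪·, ρ(vᵢ - vᵢ₊₁)⟫`, whose value at `x` is `det(vᵢ,x) + det(x,vᵢ₊₁)`, attains its maximum over the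
vertices exactly at `vᵢ` and `vᵢ₊₁`; so the facets whose lines miss the origin are the edges
`[vᵢ,vᵢ₊₁]`. The summand of the facet vector does not change when `u` is rescaled by a positive
factor, and for `u = ρ(vᵢ - vᵢ₊₁)` the support function equals `det(vᵢ,vᵢ₊₁)`, twice the area of
the triangle spanned by the edge and the origin. -/

open NormedSpace (normalize)

/-! ### Support functions and faces -/

section Face

variable {n : ℕ} {P S : Set (E n)} {x u : E n} {a c : ℝ}

lemma inner_le_suppFn (hP : IsCompact P) (hx : x ∈ P) : ⟪x, u⟫ ≤ suppFn P u :=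
  le_csSup (hP.image (by fun_prop : Continuous fun y : E n => ⟪y, u⟫)).bddAbove ⟨x, hx, rfl⟩

lemma isLinearMap_inner_left (u : E n) : IsLinearMap ℝ fun x : E n => ⟪x, u⟫ :=
  ⟨fun x y => inner_add_left x y u, fun c x => real_inner_smul_left x u c⟩

lemma suppFn_convexHull_eq (hle : ∀ y ∈ S, ⟪y, u⟫ ≤ c) (hx : x ∈ S) (hxu : ⟪x, u⟫ = c) :
    suppFn (convexHull ℝ S) u = c := by
  refine IsGreatest.csSup_eq ⟨⟨x, subset_convexHull ℝ S hx, hxu⟩, ?_⟩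
  rintro _ ⟨y, hy, rfl⟩
  exact convexHull_min hle (convex_halfSpace_le (isLinearMap_inner_left u) c) hy

lemma convex_union_halfSpace_lt {V : Type*} [AddCommGroup V] [Module ℝ V] {f : V → ℝ} {C : Set V}
    (hf : IsLinearMap ℝ f) (hC : Convex ℝ C) (hCf : ∀ x ∈ C, f x = c) :
    Convex ℝ (C ∪ {x | f x < c}) := by
  have hle : ∀ x ∈ C ∪ {x | f x < c}, f x ≤ c := by
    rintro x (hx | hx)
    exacts [(hCf x hx).le, le_of_lt hx]
  rw [convex_iff_forall_pos]
  intro x hx y hy s t hs ht hst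
  by_cases h : x ∈ C ∧ y ∈ C
  · exact .inl (hC h.1 h.2 hs.le ht.le hst)
  · refine .inr ?_
    have hc : c = s * c + t * c := by rw [← add_mul, hst, one_mul]
    rw [Set.mem_ofPred_eq, hf.map_add, hf.map_smul, hf.map_smul, smul_eq_mul, smul_eq_mul, hc]
    rcases hx with hxC | hxc
    · have hyc : f y < c := hy.resolve_left fun hyC => h ⟨hxC, hyC⟩
      exact add_lt_add_of_le_of_lt (by rw [hCf x hxC]) (by gcongr)
    · have hxc : f x < c := hxc
      exact add_lt_add_of_lt_of_le (by gcongr) (by gcongr; exact hle y hy)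

lemma face_convexHull (hS : ∀ x ∈ S, ⟪x, u⟫ ≤ suppFn (convexHull ℝ S) u) :
    face (convexHull ℝ S) u =
      convexHull ℝ {x ∈ S | ⟪x, u⟫ = suppFn (convexHull ℝ S) u} := by
  set c := suppFn (convexHull ℝ S) u
  set T := {x ∈ S | ⟪x, u⟫ = c}
  have hT : ∀ x ∈ convexHull ℝ T, ⟪x, u⟫ = c := fun x hx =>
    convexHull_min (fun y hy => hy.2) (convex_hyperplane (isLinearMap_inner_left u) c) hx
  refine Set.Subset.antisymm ?_ fun x hx => ⟨convexHull_mono (Set.sep_subset S _) hx, hT x hx⟩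
  rintro x ⟨hx, hxu⟩
  have hST : S ⊆ convexHull ℝ T ∪ {x | ⟪x, u⟫ < c} := fun y hy =>
    (hS y hy).eq_or_lt.imp (fun h => subset_convexHull ℝ T ⟨hy, h⟩) id
  have hxT := convexHull_min hST
    (convex_union_halfSpace_lt (isLinearMap_inner_left u) (convex_convexHull ℝ T) hT) hx
  exact hxT.resolve_right fun hlt => hlt.ne hxu

lemma zero_mem_affineSpan_face_iff (h0 : (0 : E n) ∈ P) :
    (0 : E n) ∈ affineSpan ℝ (face P u) ↔ suppFn P u = 0 := by
  constructor
  · intro h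
    have hface : ∀ x ∈ face P u, innerₛₗ ℝ u x = suppFn P u := fun x hx => by
      rw [innerₛₗ_apply_apply, real_inner_comm, hx.2]
    have hspan : innerₛₗ ℝ u (0 : E n) ∈ affineSpan ℝ (innerₛₗ ℝ u '' face P u) := by
      have := AffineSubspace.mem_map_of_mem (innerₛₗ ℝ u).toAffineMap h
      rwa [AffineSubspace.map_span] at this
    have hsub : innerₛₗ ℝ u '' face P u ⊆ {suppFn P u} := by
      rintro _ ⟨x, hx, rfl⟩
      exact hface x hx
    have := affineSpan_mono ℝ hsub hspan
    rw [AffineSubspace.mem_affineSpan_singleton, map_zero] at this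
    exact this.symm
  · exact fun h => subset_affineSpan ℝ _ ⟨h0, by rw [inner_zero_left, h]⟩

lemma suppFn_smul (ha : 0 ≤ a) : suppFn P (a • u) = a * suppFn P u := by
  rw [suppFn, suppFn, ← smul_eq_mul, ← Real.sSup_smul_of_nonneg ha, ← Set.image_smul,
    Set.image_image]
  simp only [real_inner_smul_right, smul_eq_mul]

lemma face_smul (ha : 0 < a) : face P (a • u) = face P u := by
  simp only [face, suppFn_smul ha.le, real_inner_smul_right, mul_right_inj' ha.ne']

lemma suppFn_normalize : suppFn P (normalize u) = ‖u‖⁻¹ * suppFn P u :=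
  suppFn_smul (inv_nonneg.2 (norm_nonneg u))

lemma face_normalize (hu : u ≠ 0) : face P (normalize u) = face P u :=
  face_smul (inv_pos.2 (norm_pos_iff.2 hu))

lemma fv_summand_normalize (ζ : ℝ → ℝ) (hu : u ≠ 0) :
    (ζ (coneVol P (normalize u)) / suppFn P (normalize u)) • normalize u =
      (ζ (coneVol P u) / suppFn P u) • u := by
  have hu' : ‖u‖ ≠ 0 := norm_ne_zero_iff.2 hu
  rw [coneVol, coneVol, face_normalize hu, suppFn_normalize, NormedSpace.normalize, smul_smul]
  congr 1
  field_simp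

lemma nontrivial_of_polyDim_pos (hP : 0 < polyDim P) : P.Nontrivial := by
  by_contra h
  rw [polyDim, direction_affineSpan,
    vectorSpan_of_subsingleton ℝ (Set.not_nontrivial_iff.1 h), finrank_bot] at hP
  exact hP.false

lemma polyDim_segment {x y : E n} (hxy : x ≠ y) : polyDim (segment ℝ x y) = 1 := by
  rw [polyDim, ← convexHull_pair, affineSpan_convexHull, direction_affineSpan, vectorSpan_pair,
    finrank_span_singleton (by rwa [vsub_eq_sub, sub_ne_zero])]

lemma suppFn_pos_of_mem_goodNormals (hP : IsCompact P) (h0 : (0 : E n) ∈ P)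
    (hu : u ∈ goodNormals P) : 0 < suppFn P u := by
  have hle : 0 ≤ suppFn P u := by simpa only [inner_zero_left] using inner_le_suppFn hP h0 (u := u)
  exact hle.lt_of_ne' fun h => hu.2 ((zero_mem_affineSpan_face_iff h0).2 h)

end Face

/-! ### Planar determinants -/

section Det

variable {a b c u : E 2}

/-- The counter-clockwise rotation `ρ` of the plane by a right angle, which turns edges into
normals. -/
abbrev rho : E 2 →ₗ[ℝ] E 2 := act !![0, -1; 1, 0]

lemma rho_apply_zero (x : E 2) : rho x 0 = -x 1 := by
  simp [act, Matrix.toLpLin_apply, dotProduct, Fin.sum_univ_two]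

lemma rho_apply_one (x : E 2) : rho x 1 = x 0 := by
  simp [act, Matrix.toLpLin_apply, dotProduct, Fin.sum_univ_two]

lemma inner_eq_coord (x y : E 2) : ⟪x, y⟫ = x 0 * y 0 + x 1 * y 1 := by
  simp only [PiLp.inner_apply, Fin.sum_univ_two, RCLike.inner_apply, conj_trivial, mul_comm]

lemma det2_self (a : E 2) : det2 a a = 0 := by
  rw [det2, mul_comm, sub_self]

lemma det2_swap (a b : E 2) : det2 b a = -det2 a b := by
  simp only [det2]
  ring

lemma ne_of_det2_pos (h : 0 < det2 a b) : a ≠ b := by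
  rintro rfl
  exact h.ne' (det2_self a)

lemma left_ne_zero_of_det2_pos (h : 0 < det2 a b) : a ≠ 0 := by
  rintro rfl
  simp [det2] at h

lemma right_ne_zero_of_det2_pos (h : 0 < det2 a b) : b ≠ 0 := by
  rintro rfl
  simp [det2] at h

lemma inner_rho_sub (x a b : E 2) : ⟪x, rho (a - b)⟫ = det2 a x + det2 x b := by
  simp only [inner_eq_coord, rho_apply_zero, rho_apply_one, PiLp.sub_apply, det2]
  ring

lemma det2_smul_cyclic (a b c : E 2) : det2 b c • a + det2 c a • b + det2 a b • c = 0 := by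
  ext i
  simp only [det2, PiLp.add_apply, PiLp.smul_apply, PiLp.zero_apply, smul_eq_mul]
  fin_cases i <;> ring!

lemma det2_smul_eq_rho (a b u : E 2) : det2 a b • u = rho (⟪b, u⟫ • a - ⟪a, u⟫ • b) := by
  ext i
  fin_cases i
  · change (det2 a b • u) 0 = rho _ 0
    simp only [rho_apply_zero, inner_eq_coord, det2, PiLp.sub_apply, PiLp.smul_apply, smul_eq_mul]
    ring
  · change (det2 a b • u) 1 = rho _ 1
    simp only [rho_apply_one, inner_eq_coord, det2, PiLp.sub_apply, PiLp.smul_apply, smul_eq_mul]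
    ring

lemma smul_add_smul_mem_convexHull {V : Type*} [AddCommGroup V] [Module ℝ V] (a b : V) {s t : ℝ}
    (hs : 0 ≤ s) (ht : 0 ≤ t) (hst : s + t ≤ 1) :
    s • a + t • b ∈ convexHull ℝ ({0, a, b} : Set V) := by
  have h := (convex_convexHull ℝ ({0, a, b} : Set V)).sum_mem (t := Finset.univ)
    (w := ![1 - s - t, s, t]) (z := ![0, a, b])
    (by intro i _; fin_cases i <;> simp <;> linarith)
    (by rw [Fin.sum_univ_three]; change 1 - s - t + s + t = 1; ring)
    (by intro i _; apply subset_convexHull; fin_cases i <;> simp)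
  simpa [Fin.sum_univ_three] using h

lemma det2_pos_trans (h0 : (0 : E 2) ∉ convexHull ℝ {a, b, c}) (hab : 0 < det2 a b)
    (hbc : 0 < det2 b c) : 0 < det2 a c := by
  by_contra! hac
  have hca : 0 ≤ det2 c a := by rw [det2_swap]; exact neg_nonneg.2 hac
  have hmem := (Finset.univ : Finset (Fin 3)).centerMass_mem_convexHull
    (w := ![det2 b c, det2 c a, det2 a b]) (z := ![a, b, c]) (s := {a, b, c})
    (by intro i _; fin_cases i; exacts [hbc.le, hca, hab.le])
    (by simp only [Fin.sum_univ_three]; exact add_pos_of_nonneg_of_pos (add_nonneg hbc.le hca) hab)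
    (by intro i _; fin_cases i <;> simp)
  have hzero : ∑ i, (![det2 b c, det2 c a, det2 a b] : Fin 3 → ℝ) i • (![a, b, c] : Fin 3 → E 2) i
      = 0 := by
    rw [Fin.sum_univ_three]
    exact det2_smul_cyclic a b c
  rw [Finset.centerMass, hzero, smul_zero] at hmem
  exact h0 hmem

lemma det2_lt_det2_add_det2 (hb : b ∉ convexHull ℝ {0, a, c}) (hab : 0 ≤ det2 a b)
    (hbc : 0 ≤ det2 b c) (hac : 0 < det2 a c) : det2 a c < det2 a b + det2 b c := by
  by_contra! hle
  have hb_eq : b = (det2 b c / det2 a c) • a + (det2 a b / det2 a c) • c := by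
    have h := det2_smul_cyclic a b c
    rw [det2_swap a c, neg_smul, add_right_comm, add_neg_eq_zero] at h
    rw [div_eq_inv_mul, div_eq_inv_mul, mul_smul, mul_smul, ← smul_add, h,
      inv_smul_smul₀ hac.ne']
  refine hb (hb_eq ▸ smul_add_smul_mem_convexHull a c (div_nonneg hbc hac.le)
    (div_nonneg hab hac.le) ?_)
  rw [← add_div, div_le_one hac]
  linarith

lemma lt_inner_of_det2_lt {t : ℝ} (hac : 0 < det2 a c) (hlt : det2 a c < det2 a b + det2 b c)
    (ht : 0 < t) (ha : ⟪a, u⟫ = t) (hc : ⟪c, u⟫ = t) : t < ⟪b, u⟫ := by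
  have h : det2 b c * t + det2 c a * ⟪b, u⟫ + det2 a b * t = 0 := by
    have := congrArg (fun x : E 2 => ⟪x, u⟫) (det2_smul_cyclic a b c)
    simpa only [inner_add_left, real_inner_smul_left, ha, hc, inner_zero_left] using this
  have hmul : det2 a c * t < det2 a c * ⟪b, u⟫ :=
    calc det2 a c * t < (det2 a b + det2 b c) * t := by gcongr
      _ = det2 a c * ⟪b, u⟫ := by linear_combination h - ⟪b, u⟫ * det2_swap a c
  exact lt_of_mul_lt_mul_left hmul hac.le

lemma normalize_rho_sub {t : ℝ} (hab : 0 < det2 a b) (ht : 0 < t) (ha : ⟪a, u⟫ = t)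
    (hb : ⟪b, u⟫ = t) (hu : ‖u‖ = 1) : normalize (rho (a - b)) = u := by
  have h : t • rho (a - b) = det2 a b • u := by
    rw [det2_smul_eq_rho, ha, hb, ← smul_sub, map_smul]
  rw [← NormedSpace.normalize_smul_of_pos ht, h, NormedSpace.normalize_smul_of_pos hab,
    NormedSpace.normalize_eq_self_of_norm_eq_one hu]

end Det

/-! ### The area of a triangle -/

section Area

open MeasureTheory

lemma volume_triangle_prod :
    volume {p : ℝ × ℝ | 0 ≤ p.1 ∧ 0 ≤ p.2 ∧ p.1 + p.2 ≤ 1} = ENNReal.ofReal (1 / 2) := by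
  have hmeas : MeasurableSet {p : ℝ × ℝ | 0 ≤ p.1 ∧ 0 ≤ p.2 ∧ p.1 + p.2 ≤ 1} := by measurability
  have hslice (x : ℝ) : volume (Prod.mk x ⁻¹' {p : ℝ × ℝ | 0 ≤ p.1 ∧ 0 ≤ p.2 ∧ p.1 + p.2 ≤ 1}) =
      (Set.Icc (0 : ℝ) 1).indicator (fun x => ENNReal.ofReal (1 - x)) x := by
    by_cases hx : x ∈ Set.Icc (0 : ℝ) 1
    · have : Prod.mk x ⁻¹' {p : ℝ × ℝ | 0 ≤ p.1 ∧ 0 ≤ p.2 ∧ p.1 + p.2 ≤ 1} = Set.Icc 0 (1 - x) := by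
        ext y
        simp [hx.1, le_sub_iff_add_le']
      rw [this, Real.volume_Icc, sub_zero, Set.indicator_of_mem hx]
    · have : Prod.mk x ⁻¹' {p : ℝ × ℝ | 0 ≤ p.1 ∧ 0 ≤ p.2 ∧ p.1 + p.2 ≤ 1} = ∅ :=
        Set.eq_empty_of_forall_notMem fun y ⟨h0, h1, h2⟩ => hx ⟨h0, by linarith⟩
      rw [this, measure_empty, Set.indicator_of_notMem hx]
  have hint : ∫ x in Set.Icc (0 : ℝ) 1, (1 - x) = 1 / 2 := by
    rw [integral_Icc_eq_integral_Ioc, ← intervalIntegral.integral_of_le zero_le_one,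
      intervalIntegral.integral_sub (by simp) (by simp), integral_id, integral_one]
    norm_num
  rw [Measure.volume_eq_prod, Measure.prod_apply hmeas, lintegral_congr hslice,
    lintegral_indicator measurableSet_Icc, ← ofReal_integral_eq_lintegral_ofReal, hint]
  · exact (Continuous.continuousOn (by fun_prop)).integrableOn_Icc
  · filter_upwards [ae_restrict_mem measurableSet_Icc] with x hx
    exact sub_nonneg.2 hx.2

/-- The standard triangle `T²` of the plane, from which every triangle with a vertex at the origin
arises by a linear map. It is described by inequalities, so that its area can be integrated. -/
def stdTriangle : Set (E 2) := {x | 0 ≤ x 0 ∧ 0 ≤ x 1 ∧ x 0 + x 1 ≤ 1}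

lemma volume_stdTriangle : volume stdTriangle = ENNReal.ofReal (1 / 2) := by
  have hpres := (volume_preserving_finTwoArrow ℝ).comp
    (PiLp.volume_preserving_ofLp (Fin 2))
  have hmeas : MeasurableSet {p : ℝ × ℝ | 0 ≤ p.1 ∧ 0 ≤ p.2 ∧ p.1 + p.2 ≤ 1} := by measurability
  rw [← volume_triangle_prod, ← hpres.measure_preimage hmeas.nullMeasurableSet]
  rfl

lemma convex_stdTriangle : Convex ℝ stdTriangle := by
  rintro x ⟨hx0, hx1, hx⟩ y ⟨hy0, hy1, hy⟩ s t hs ht hst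
  refine ⟨add_nonneg (mul_nonneg hs hx0) (mul_nonneg ht hy0),
    add_nonneg (mul_nonneg hs hx1) (mul_nonneg ht hy1), ?_⟩
  calc (s * x 0 + t * y 0) + (s * x 1 + t * y 1) = s * (x 0 + x 1) + t * (y 0 + y 1) := by ring
    _ ≤ s * 1 + t * 1 := by gcongr
    _ = 1 := by rw [mul_one, mul_one, hst]

lemma act_columns (a b x : E 2) :
    act !![a 0, b 0; a 1, b 1] x = x 0 • a + x 1 • b := by
  ext i
  fin_cases i <;> simp [act, Matrix.toLpLin_apply, dotProduct, Fin.sum_univ_two, mul_comm]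

lemma det_act_columns (a b : E 2) : LinearMap.det (act !![a 0, b 0; a 1, b 1]) = det2 a b := by
  rw [act, Matrix.toEuclideanLin_eq_toLin_orthonormal, LinearMap.det_toLin,
    Matrix.det_fin_two_of, det2]
  ring

lemma convexHull_triangle_eq_image (a b : E 2) :
    convexHull ℝ {0, a, b} = act !![a 0, b 0; a 1, b 1] '' stdTriangle := by
  apply Set.Subset.antisymm
  · refine convexHull_min ?_ (convex_stdTriangle.linear_image _)
    rintro x (rfl | rfl | rfl)
    · exact ⟨0, by simp [stdTriangle], map_zero _⟩
    · exact ⟨!₂[1, 0], by simp [stdTriangle], by simp [act_columns]⟩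
    · exact ⟨!₂[0, 1], by simp [stdTriangle], by simp [act_columns]⟩
  · rintro _ ⟨x, ⟨h0, h1, hle⟩, rfl⟩
    rw [act_columns]
    exact smul_add_smul_mem_convexHull a b h0 h1 hle

lemma volume_convexHull_triangle (a b : E 2) :
    volume (convexHull ℝ {0, a, b}) = ENNReal.ofReal (|det2 a b| / 2) := by
  rw [convexHull_triangle_eq_image, Measure.addHaar_image_linearMap,
    det_act_columns, volume_stdTriangle, ← ENNReal.ofReal_mul (abs_nonneg _), mul_one_div]

end Area

/-! ### Polygons with a vertex at the origin -/

/-- The points `0, v₁, …, v_r` that are to be the vertices of a polygon; only the values of the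
sequence `v` at `1, …, r` matter. -/
def vertexSet (r : ℕ) (v : ℕ → E 2) : Set (E 2) := {0} ∪ v '' Set.Icc 1 r

/-- The polygon `P = conv {0, v₁, …, v_r}` whose facet vector is computed. -/
def polygon (r : ℕ) (v : ℕ → E 2) : Set (E 2) := convexHull ℝ (vertexSet r v)

/-- The polygon `conv {0, v₁, …, v_r}` has the vertices `0, v₁, …, v_r`, labelled
counter-clockwise. That they are vertices is encoded as convex independence. -/
structure IsCcwPolygon (r : ℕ) (v : ℕ → E 2) : Prop where
  convexIndependent : ConvexIndependent ℝ ((↑) : vertexSet r v → E 2)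
  det2_pos : ∀ i, 1 ≤ i → i < r → 0 < det2 (v i) (v (i + 1))

/-- The outer normal `ρ (vᵢ - vᵢ₊₁)` of the edge `[vᵢ, vᵢ₊₁]`, not scaled to unit length, so that
the support function takes the value `det(vᵢ, vᵢ₊₁)` on it. -/
def edgeNormal (v : ℕ → E 2) (i : ℕ) : E 2 := rho (v i - v (i + 1))

section Polygon

variable {r : ℕ} {v : ℕ → E 2} {i j k : ℕ} {u : E 2}

lemma zero_mem_vertexSet (r : ℕ) (v : ℕ → E 2) : 0 ∈ vertexSet r v := .inl rfl

lemma mem_vertexSet (hi : 1 ≤ i) (hir : i ≤ r) : v i ∈ vertexSet r v := .inr ⟨i, ⟨hi, hir⟩, rfl⟩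

lemma vertexSet_subset_polygon (r : ℕ) (v : ℕ → E 2) : vertexSet r v ⊆ polygon r v :=
  subset_convexHull ℝ _

lemma isCompact_polygon (r : ℕ) (v : ℕ → E 2) : IsCompact (polygon r v) :=
  ((Set.finite_singleton 0).union ((Set.finite_Icc 1 r).image v)).isCompact_convexHull ℝ

lemma inner_edgeNormal_left (v : ℕ → E 2) (i : ℕ) :
    ⟪v i, edgeNormal v i⟫ = det2 (v i) (v (i + 1)) := by
  rw [edgeNormal, inner_rho_sub, det2_self, zero_add]

lemma inner_edgeNormal_right (v : ℕ → E 2) (i : ℕ) :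
    ⟪v (i + 1), edgeNormal v i⟫ = det2 (v i) (v (i + 1)) := by
  rw [edgeNormal, inner_rho_sub, det2_self, add_zero]

lemma exists_lt_inner_eq_suppFn (hu : u ∈ goodNormals (polygon r v)) :
    ∃ i j, 1 ≤ i ∧ i < j ∧ j ≤ r ∧ ⟪v i, u⟫ = suppFn (polygon r v) u ∧
      ⟪v j, u⟫ = suppFn (polygon r v) u := by
  have hpos := suppFn_pos_of_mem_goodNormals (isCompact_polygon r v)
    (vertexSet_subset_polygon r v (zero_mem_vertexSet r v)) hu
  have hface : face (polygon r v) u =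
      convexHull ℝ {x ∈ vertexSet r v | ⟪x, u⟫ = suppFn (polygon r v) u} :=
    face_convexHull fun x hx =>
      inner_le_suppFn (isCompact_polygon r v) (vertexSet_subset_polygon r v hx)
  have hnontriv : {x ∈ vertexSet r v | ⟪x, u⟫ = suppFn (polygon r v) u}.Nontrivial := by
    by_contra h
    have hsub := Set.not_nontrivial_iff.1 h
    refine (nontrivial_of_polyDim_pos (P := face (polygon r v) u) ?_).not_subsingleton ?_
    · rw [hu.1.2]; norm_num
    · rw [hface, convexHull_eq_self.2 hsub.convex]
      exact hsub
  have hindex {x : E 2} (hx : x ∈ vertexSet r v) (hxu : ⟪x, u⟫ = suppFn (polygon r v) u) :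
      ∃ i, 1 ≤ i ∧ i ≤ r ∧ v i = x := by
    rcases hx with rfl | ⟨i, ⟨hi, hir⟩, rfl⟩
    · exact absurd hxu (by rw [inner_zero_left]; exact hpos.ne)
    · exact ⟨i, hi, hir, rfl⟩
  obtain ⟨x, ⟨hx, hxu⟩, y, ⟨hy, hyu⟩, hxy⟩ := hnontriv
  obtain ⟨i, hi, hir, rfl⟩ := hindex hx hxu
  obtain ⟨j, hj, hjr, rfl⟩ := hindex hy hyu
  rcases lt_or_gt_of_ne (ne_of_apply_ne v hxy) with hij | hji
  · exact ⟨i, j, hi, hij, hjr, hxu, hyu⟩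
  · exact ⟨j, i, hj, hji, hir, hyu, hxu⟩

namespace IsCcwPolygon

lemma of_extremePoints_eq (hvert : Set.extremePoints ℝ (polygon r v) = vertexSet r v)
    (hccw : ∀ i, 2 ≤ i → i ≤ r → 0 < det2 (v (i - 1)) (v i)) : IsCcwPolygon r v where
  convexIndependent := hvert ▸ (convex_convexHull ℝ _).convexIndependent_extremePoints
  det2_pos i hi hir := hccw (i + 1) (Nat.succ_le_succ hi) hir

variable (h : IsCcwPolygon r v)
include h

lemma mem_of_mem_convexHull {x : E 2} {T : Set (E 2)} (hT : T ⊆ vertexSet r v)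
    (hx : x ∈ vertexSet r v) (hxT : x ∈ convexHull ℝ T) : x ∈ T :=
  convexIndependent_set_iff_inter_convexHull_subset.1 h.convexIndependent T hT ⟨hx, hxT⟩

lemma det2_pos_of_lt (hi : 1 ≤ i) (hij : i < j) (hjr : j ≤ r) : 0 < det2 (v i) (v j) := by
  induction j, hij using Nat.le_induction with
  | base => exact h.det2_pos i hi hjr
  | succ k hik ih =>
    have hvik := ih (by omega)
    have hvk := h.det2_pos k (by omega) hjr
    refine det2_pos_trans (fun h0 => ?_) hvik hvk
    have hsub : {v i, v k, v (k + 1)} ⊆ vertexSet r v := by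
      rintro x (rfl | rfl | rfl) <;> exact mem_vertexSet (by omega) (by omega)
    rcases h.mem_of_mem_convexHull hsub (zero_mem_vertexSet r v) h0 with h0 | h0 | h0
    · exact left_ne_zero_of_det2_pos hvik h0.symm
    · exact left_ne_zero_of_det2_pos hvk h0.symm
    · exact right_ne_zero_of_det2_pos hvk h0.symm

lemma det2_lt_add_of_lt (hi : 1 ≤ i) (hij : i < j) (hjk : j < k) (hkr : k ≤ r) :
    det2 (v i) (v k) < det2 (v i) (v j) + det2 (v j) (v k) := by
  have hvij := h.det2_pos_of_lt hi hij (by omega)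
  have hvjk := h.det2_pos_of_lt (by omega) hjk hkr
  refine det2_lt_det2_add_det2 (fun hj => ?_) hvij.le hvjk.le
    (h.det2_pos_of_lt hi (hij.trans hjk) hkr)
  have hsub : {0, v i, v k} ⊆ vertexSet r v := by
    rintro x (rfl | rfl | rfl)
    exacts [zero_mem_vertexSet r v, mem_vertexSet hi (by omega), mem_vertexSet (by omega) hkr]
  rcases h.mem_of_mem_convexHull hsub (mem_vertexSet (by omega) (by omega)) hj with hj | hj | hj
  · exact left_ne_zero_of_det2_pos hvjk hj
  · exact ne_of_det2_pos hvij hj.symm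
  · exact ne_of_det2_pos hvjk hj

lemma edgeNormal_ne_zero (hi : 1 ≤ i) (hir : i < r) : edgeNormal v i ≠ 0 := by
  intro h0
  have hinner := inner_edgeNormal_left v i
  rw [h0, inner_zero_right] at hinner
  exact (h.det2_pos i hi hir).ne hinner

lemma inner_edgeNormal_lt (hi : 1 ≤ i) (hir : i < r) {x : E 2} (hx : x ∈ vertexSet r v)
    (hxi : x ≠ v i) (hxi' : x ≠ v (i + 1)) :
    ⟪x, edgeNormal v i⟫ < det2 (v i) (v (i + 1)) := by
  rcases hx with rfl | ⟨k, ⟨hk, hkr⟩, rfl⟩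
  · rw [inner_zero_left]
    exact h.det2_pos i hi hir
  · have hki : k ≠ i := ne_of_apply_ne v hxi
    have hki' : k ≠ i + 1 := ne_of_apply_ne v hxi'
    rw [edgeNormal, inner_rho_sub]
    rcases lt_or_gt_of_ne hki with hlt | hgt
    · linarith [h.det2_lt_add_of_lt hk hlt i.lt_succ_self hir, det2_swap (v k) (v i)]
    · linarith [h.det2_lt_add_of_lt hi i.lt_succ_self (show i + 1 < k by omega) hkr,
        det2_swap (v (i + 1)) (v k)]

lemma suppFn_edgeNormal (hi : 1 ≤ i) (hir : i < r) :
    suppFn (polygon r v) (edgeNormal v i) = det2 (v i) (v (i + 1)) := by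
  refine suppFn_convexHull_eq (fun x hx => ?_) (mem_vertexSet hi hir.le)
    (inner_edgeNormal_left v i)
  by_cases hxi : x = v i
  · rw [hxi, inner_edgeNormal_left]
  by_cases hxi' : x = v (i + 1)
  · rw [hxi', inner_edgeNormal_right]
  exact (h.inner_edgeNormal_lt hi hir hx hxi hxi').le

lemma face_edgeNormal (hi : 1 ≤ i) (hir : i < r) :
    face (polygon r v) (edgeNormal v i) = segment ℝ (v i) (v (i + 1)) := by
  have hmax : {x ∈ vertexSet r v | ⟪x, edgeNormal v i⟫ = suppFn (polygon r v) (edgeNormal v i)} =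
      {v i, v (i + 1)} := by
    rw [h.suppFn_edgeNormal hi hir]
    refine Set.Subset.antisymm ?_ ?_
    · rintro x ⟨hx, hxu⟩
      by_contra hne
      rw [Set.mem_insert_iff, Set.mem_singleton_iff, not_or] at hne
      exact (h.inner_edgeNormal_lt hi hir hx hne.1 hne.2).ne hxu
    · rintro x (rfl | rfl)
      exacts [⟨mem_vertexSet hi hir.le, inner_edgeNormal_left v i⟩,
        ⟨mem_vertexSet (by omega) hir, inner_edgeNormal_right v i⟩]
  rw [← convexHull_pair, ← hmax]
  exact face_convexHull fun x hx =>
    inner_le_suppFn (isCompact_polygon r v) (vertexSet_subset_polygon r v hx)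

lemma coneVol_edgeNormal (hi : 1 ≤ i) (hir : i < r) :
    coneVol (polygon r v) (edgeNormal v i) = det2 (v i) (v (i + 1)) / 2 := by
  have hpos := h.det2_pos i hi hir
  rw [coneVol, h.face_edgeNormal hi hir, ← convexHull_pair, convexHull_convexHull_union_right,
    Set.singleton_union, volume_convexHull_triangle, abs_of_pos hpos,
    ENNReal.toReal_ofReal (half_pos hpos).le]

lemma vertices_injOn : Set.InjOn v (Set.Icc 1 r) := by
  intro i hi j hj hij
  rcases lt_trichotomy i j with hlt | heq | hgt
  · exact absurd hij (ne_of_det2_pos (h.det2_pos_of_lt hi.1 hlt hj.2))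
  · exact heq
  · exact absurd hij.symm (ne_of_det2_pos (h.det2_pos_of_lt hj.1 hgt hi.2))

lemma eq_or_eq_succ_of_mem_segment (hi : 1 ≤ i) (hir : i < r) (hk : 1 ≤ k) (hkr : k ≤ r)
    (hmem : v k ∈ segment ℝ (v i) (v (i + 1))) : k = i ∨ k = i + 1 := by
  have hsub : {v i, v (i + 1)} ⊆ vertexSet r v := by
    rintro x (rfl | rfl) <;> exact mem_vertexSet (by omega) (by omega)
  rw [← convexHull_pair] at hmem
  exact (h.mem_of_mem_convexHull hsub (mem_vertexSet hk hkr) hmem).imp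
    (fun hvk => h.vertices_injOn ⟨hk, hkr⟩ ⟨hi, hir.le⟩ hvk)
    (fun hvk => h.vertices_injOn ⟨hk, hkr⟩ ⟨by omega, hir⟩ hvk)

lemma normalize_edgeNormal_injOn :
    Set.InjOn (fun i => normalize (edgeNormal v i)) (Finset.Ico 1 r : Finset ℕ) := by
  intro i hi j hj hij
  rw [Finset.coe_Ico, Set.mem_Ico] at hi hj
  have hseg : segment ℝ (v i) (v (i + 1)) = segment ℝ (v j) (v (j + 1)) := by
    rw [← h.face_edgeNormal hi.1 hi.2, ← face_normalize (h.edgeNormal_ne_zero hi.1 hi.2),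
      ← h.face_edgeNormal hj.1 hj.2, ← face_normalize (h.edgeNormal_ne_zero hj.1 hj.2)]
    exact congrArg (face _) hij
  have hleft := h.eq_or_eq_succ_of_mem_segment hj.1 hj.2 hi.1 hi.2.le
    (hseg ▸ left_mem_segment ℝ _ _)
  have hright := h.eq_or_eq_succ_of_mem_segment hj.1 hj.2 (by omega) hi.2
    (hseg ▸ right_mem_segment ℝ _ _)
  omega

lemma normalize_edgeNormal_mem_goodNormals (hi : 1 ≤ i) (hir : i < r) :
    normalize (edgeNormal v i) ∈ goodNormals (polygon r v) := by
  have hne := h.edgeNormal_ne_zero hi hir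
  have hpos := h.det2_pos i hi hir
  refine ⟨⟨NormedSpace.norm_normalize hne, ?_⟩, ?_⟩
  · rw [face_normalize hne, h.face_edgeNormal hi hir, polyDim_segment (ne_of_det2_pos hpos)]
  · rw [face_normalize hne, zero_mem_affineSpan_face_iff
      (vertexSet_subset_polygon r v (zero_mem_vertexSet r v)), h.suppFn_edgeNormal hi hir]
    exact hpos.ne'

lemma exists_normalize_edgeNormal_eq (hu : u ∈ goodNormals (polygon r v)) :
    ∃ i, 1 ≤ i ∧ i < r ∧ normalize (edgeNormal v i) = u := by
  have hpos := suppFn_pos_of_mem_goodNormals (isCompact_polygon r v)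
    (vertexSet_subset_polygon r v (zero_mem_vertexSet r v)) hu
  obtain ⟨i, j, hi, hij, hjr, hiu, hju⟩ := exists_lt_inner_eq_suppFn hu
  obtain rfl : j = i + 1 := by
    by_contra hne
    have hgap : i + 1 < j := by omega
    have hlt : suppFn (polygon r v) u < ⟪v (i + 1), u⟫ :=
      lt_inner_of_det2_lt (h.det2_pos_of_lt hi hij hjr)
        (h.det2_lt_add_of_lt hi i.lt_succ_self hgap hjr) hpos hiu hju
    exact hlt.not_ge (inner_le_suppFn (isCompact_polygon r v)
      (vertexSet_subset_polygon r v (mem_vertexSet (by omega) (by omega))))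
  exact ⟨i, hi, hjr, normalize_rho_sub (h.det2_pos i hi hjr) hpos hiu hju hu.1.1⟩

lemma goodNormals_eq :
    goodNormals (polygon r v) =
      (fun i => normalize (edgeNormal v i)) '' (Finset.Ico 1 r : Finset ℕ) := by
  ext u
  simp only [Set.mem_image, Finset.coe_Ico, Set.mem_Ico, and_assoc]
  refine ⟨h.exists_normalize_edgeNormal_eq, ?_⟩
  rintro ⟨i, hi, hir, rfl⟩
  exact h.normalize_edgeNormal_mem_goodNormals hi hir

lemma fv_eq_sum (ζ : ℝ → ℝ) :
    fv ζ (polygon r v) = ∑ i ∈ Finset.Ico 1 r,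
      (ζ (det2 (v i) (v (i + 1)) / 2) / det2 (v i) (v (i + 1))) • edgeNormal v i := by
  rw [fv, h.goodNormals_eq, finsum_mem_image h.normalize_edgeNormal_injOn, finsum_mem_coe_finset]
  refine Finset.sum_congr rfl fun i hi => ?_
  obtain ⟨hi, hir⟩ := Finset.mem_Ico.1 hi
  rw [fv_summand_normalize ζ (h.edgeNormal_ne_zero hi hir), h.coneVol_edgeNormal hi hir,
    h.suppFn_edgeNormal hi hir]

end IsCcwPolygon

end Polygon

theorem fv_eq_half_rho_V_general {ζ : ℝ → ℝ} (hζ : ∀ a : ℝ, 0 < a → ζ (a + a) = ζ a + ζ a)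
    {r : ℕ} {v : ℕ → E 2} (h : IsCcwPolygon r v) :
    fv ζ (polygon r v) = (1 / 2 : ℝ) • rho
      (∑ i ∈ Finset.Icc 2 r,
        (ζ (det2 (v (i - 1)) (v i)) / det2 (v (i - 1)) (v i)) • (v (i - 1) - v i)) := by
  have hshift := Finset.sum_Ico_add' (fun i =>
    (ζ (det2 (v (i - 1)) (v i)) / det2 (v (i - 1)) (v i)) • (v (i - 1) - v i)) 1 r 1
  rw [h.fv_eq_sum, ← Finset.Ico_add_one_right_eq_Icc, ← hshift, map_sum, Finset.smul_sum]
  refine Finset.sum_congr rfl fun i hi => ?_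
  obtain ⟨hi, hir⟩ := Finset.mem_Ico.1 hi
  have hhalf := hζ _ (half_pos (h.det2_pos i hi hir))
  rw [add_halves, ← two_mul] at hhalf
  rw [add_tsub_cancel_right, map_smul, smul_smul, hhalf, edgeNormal]
  congr 1
  ring

/-- in the plane, for `P = conv{0, v₁, …, v_r}` with `0` on the boundary
and vertices labeled counter-clockwise, `fv_ζ(P) = (1/2) ρ V°_ζ(P)`. -/
theorem fv_eq_half_rho_V {ζ : ℝ → ℝ}
    (hζ : ∀ a b : ℝ, 0 ≤ a → 0 ≤ b → ζ (a + b) = ζ a + ζ b)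
    (r : ℕ) (hr : 2 ≤ r) (v : ℕ → E 2)
    (P : Set (E 2)) (hPdef : P = convexHull ℝ ({0} ∪ v '' Set.Icc 1 r))
    (hdim : polyDim P = 2) (hbd : (0 : E 2) ∈ frontier P)
    (hvert : Set.extremePoints ℝ P = {0} ∪ v '' Set.Icc 1 r)
    (hccw : ∀ i : ℕ, 2 ≤ i → i ≤ r → 0 < det2 (v (i - 1)) (v i))
    (hedge : ∀ i : ℕ, 2 ≤ i → i ≤ r → segment ℝ (v (i - 1)) (v i) ⊆ frontier P) :
    fv ζ P = (1 / 2 : ℝ) • act !![0, -1; 1, 0]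
      (∑ i ∈ Finset.Icc 2 r,
        (ζ (det2 (v (i - 1)) (v i)) / det2 (v (i - 1)) (v i)) • (v (i - 1) - v i)) := by
  subst hPdef
  exact fv_eq_half_rho_V_general (fun a ha => hζ a a ha.le ha.le)
    (.of_extremePoints_eq hvert hccw)
end
end
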